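/- arXiv:1709.04789 — 9 statements merged into one kernel-verified Lean document; each statement's English description precedes it below -/
import Mathlib

section
/- The map μ defined by the two-phase recursive matching construction is an acyclic partial matching on the face poset P of the independence complex Ind(G_m^d); that is, the set of pairs {(σ, μ(σ)) : σ ∈ S} is a partial matching on P, and there is no cycle μ(σ_1) ≻ σ_1 ≺ μ(σ_2) ≻ σ_2 ≺ … ≺ μ(σ_t) ≻ σ_t ≺ μ(σ_1) with t ≥ 2 and σ_1, …, σ_t distinct elements of S. -/
open Finset

/-- The graph `G_m^d` on vertex set `Fin m ⊕ Fin m` (0-based indexing):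
`Sum.inl i` is the vertex `a_{i+1}` and `Sum.inr j` is the vertex `b_{j+1}` of the paper;
`a_i` is adjacent to `b_j` iff `(j - i) mod m ∈ {0, …, d-1}`. -/
def Gmd (m d : ℕ) : SimpleGraph (Fin m ⊕ Fin m) :=
  SimpleGraph.fromRel (fun u v =>
    ∃ i j : Fin m, u = Sum.inl i ∧ v = Sum.inr j ∧ (j.val + m - i.val) % m < d)

/-- A finite set of vertices is independent iff no two of its elements are adjacent. -/
def IsInd (m d : ℕ) (σ : Finset (Fin m ⊕ Fin m)) : Prop :=
  ∀ u ∈ σ, ∀ v ∈ σ, ¬ (Gmd m d).Adj u v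

/-- The face poset `P` of the independence complex `Ind (G_m^d)` (ordered by `⊆`),
including the empty simplex. -/
def faceP (m d : ℕ) : Set (Finset (Fin m ⊕ Fin m)) := {σ | IsInd m d σ}

/-- One step of the matching construction: `S_x(T) = {σ ∈ T | x ∉ σ, σ ∪ {x} ∈ T}`. -/
def stepS {α : Type*} [DecidableEq α] (x : α) (T : Set (Finset α)) : Set (Finset α) :=
  {σ | σ ∈ T ∧ x ∉ σ ∧ insert x σ ∈ T}

/-- The survivors of one step: `T \ (S_x(T) ∪ μ_x(S_x(T)))`. -/
def stepSurv {α : Type*} [DecidableEq α] (x : α) (T : Set (Finset α)) : Set (Finset α) :=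
  T \ (stepS x T ∪ (insert x) '' (stepS x T))

/-- Iterating the matching construction along a list of vertices. -/
def phase {α : Type*} [DecidableEq α] (T : Set (Finset α)) (l : List α) : Set (Finset α) :=
  l.foldl (fun T x => stepSurv x T) T

/-- The list `a_1, …, a_m`. -/
def listA (m : ℕ) : List (Fin m ⊕ Fin m) := (List.finRange m).map Sum.inl
/-- The list `b_1, …, b_m`. -/
def listB (m : ℕ) : List (Fin m ⊕ Fin m) := (List.finRange m).map Sum.inr

/-- `S_{a_{i+1}}` (0-based `i`): the set matched with `a_{i+1}` at stage `i+1` of phase one. -/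
def Sa (m d : ℕ) (i : Fin m) : Set (Finset (Fin m ⊕ Fin m)) :=
  stepS (Sum.inl i) (phase (faceP m d) ((listA m).take i.val))

/-- `M = P \ (S_1 ∪ μ_1(S_1))`, the simplices surviving phase one. -/
def setM (m d : ℕ) : Set (Finset (Fin m ⊕ Fin m)) := phase (faceP m d) (listA m)

/-- `S_{b_{i+1}}` (0-based `i`): the set matched with `b_{i+1}` at stage `i+1` of phase two. -/
def Sb (m d : ℕ) (i : Fin m) : Set (Finset (Fin m ⊕ Fin m)) :=
  stepS (Sum.inr i) (phase (setM m d) ((listB m).take i.val))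

/-- `𝒮_{a_{i+1}} = S_{a_{i+1}} ∪ μ_{a_{i+1}}(S_{a_{i+1}})`. -/
def scriptSa (m d : ℕ) (i : Fin m) : Set (Finset (Fin m ⊕ Fin m)) :=
  Sa m d i ∪ (insert (Sum.inl i)) '' (Sa m d i)

/-- `𝒮_{b_{i+1}} = S_{b_{i+1}} ∪ μ_{b_{i+1}}(S_{b_{i+1}})`. -/
def scriptSb (m d : ℕ) (i : Fin m) : Set (Finset (Fin m ⊕ Fin m)) :=
  Sb m d i ∪ (insert (Sum.inr i)) '' (Sb m d i)

/-- The critical cells `C = P \ (S ∪ μ(S))`. -/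
def setC (m d : ℕ) : Set (Finset (Fin m ⊕ Fin m)) :=
  faceP m d \ ((⋃ i : Fin m, scriptSa m d i) ∪ (⋃ i : Fin m, scriptSb m d i))

/-- The matching relation: `MatchRel σ τ` iff `τ = μ(σ)` for `σ ∈ S = S_1 ∪ S_2`. -/
def MatchRel (m d : ℕ) (σ τ : Finset (Fin m ⊕ Fin m)) : Prop :=
  (∃ i : Fin m, σ ∈ Sa m d i ∧ τ = insert (Sum.inl i) σ) ∨
  (∃ i : Fin m, σ ∈ Sb m d i ∧ τ = insert (Sum.inr i) σ)

/-- `B_{s+1} = {b_{s+1}, b_{s+2}, …, b_{s+m-d}}` (0-based `s`, subscripts mod `m`). -/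
def Bset (m d : ℕ) (s : Fin m) : Finset (Fin m ⊕ Fin m) :=
  (Finset.univ.filter (fun j : Fin m => (j.val + m - s.val) % m < m - d)).image Sum.inr

/-- `b_{n+1} ∈ σ` (0-based subscript `n`). -/
def hasB (m : ℕ) (σ : Finset (Fin m ⊕ Fin m)) (n : ℕ) : Prop :=
  ∃ j : Fin m, j.val = n ∧ Sum.inr j ∈ σ

/-- `σ ⊆ B`. -/
def onlyB (m : ℕ) (σ : Finset (Fin m ⊕ Fin m)) : Prop :=
  ∀ v ∈ σ, ∃ j : Fin m, v = Sum.inr j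

/-- Property `P_l` of the paper, with parameter `j1` (0-based: the paper's `j_1 - 1`, so
`1 ≤ j1 ≤ d`).  With 0-based subscripts `i_r = (r-1)(d+1)`, `j_r = j1 + (r-1)(d+1)` and
`k = m + j1 - (d+1)`:  σ ∈ M, σ ⊆ B, the `2l` smallest subscripts of σ are exactly
`0 = i_1, j_1, i_2, j_2, …, i_l, j_l`, the largest subscript is `k`, and
`σ \ {b_{i_r}} ∉ M`, `σ \ {b_{j_r}} ∉ M` for all `1 ≤ r ≤ l`. -/
def propP (m d l j1 : ℕ) (σ : Finset (Fin m ⊕ Fin m)) : Prop :=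
  σ ∈ setM m d ∧ onlyB m σ ∧ 1 ≤ j1 ∧ j1 ≤ d ∧
  (∀ r, 1 ≤ r → r ≤ l → hasB m σ ((r-1)*(d+1)) ∧ hasB m σ (j1 + (r-1)*(d+1))) ∧
  (∀ j : Fin m, Sum.inr j ∈ σ → j.val ≤ j1 + (l-1)*(d+1) →
      ∃ r, 1 ≤ r ∧ r ≤ l ∧ (j.val = (r-1)*(d+1) ∨ j.val = j1 + (r-1)*(d+1))) ∧
  hasB m σ (m + j1 - (d+1)) ∧
  (∀ j : Fin m, Sum.inr j ∈ σ → j.val ≤ m + j1 - (d+1)) ∧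
  (∀ r, 1 ≤ r → r ≤ l → ∀ j : Fin m,
      (j.val = (r-1)*(d+1) ∨ j.val = j1 + (r-1)*(d+1)) → σ.erase (Sum.inr j) ∉ setM m d)

/-- The concatenated vertex list. -/
def auxL (m : ℕ) : List (Fin m ⊕ Fin m) := listA m ++ listB m

/-- Survivors after `k` stages of the combined construction. -/
def auxT (m d k : ℕ) : Set (Finset (Fin m ⊕ Fin m)) := phase (faceP m d) ((auxL m).take k)

theorem stepSurv_sub {α : Type*} [DecidableEq α] (x : α) (T : Set (Finset α)) :
    stepSurv x T ⊆ T := fun _ h => h.1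

theorem auxT_succ (m d k : ℕ) (v : Fin m ⊕ Fin m) (h : (auxL m)[k]? = some v) :
    auxT m d (k+1) = stepSurv v (auxT m d k) := by
  simp [auxT, phase, List.take_add_one, h, List.foldl_append]

theorem auxT_anti (m d : ℕ) : Antitone (auxT m d) := by
  apply antitone_nat_of_succ_le
  intro k
  cases h : (auxL m)[k]? with
  | none => simp [auxT, List.take_add_one, h]
  | some v => rw [auxT_succ m d k v h]; exact stepSurv_sub _ _

theorem match_aux (m d : ℕ) (σ τ : Finset (Fin m ⊕ Fin m)) (h : MatchRel m d σ τ) :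
    ∃ k v, (auxL m)[k]? = some v ∧ σ ∈ auxT m d k ∧ τ ∈ auxT m d k ∧
      σ ∉ auxT m d (k+1) ∧ τ ∉ auxT m d (k+1) ∧ v ∉ σ ∧ τ = insert v σ := by
  have key : ∀ k v, (auxL m)[k]? = some v → σ ∈ stepS v (auxT m d k) → τ = insert v σ →
    ∃ k v, (auxL m)[k]? = some v ∧ σ ∈ auxT m d k ∧ τ ∈ auxT m d k ∧
      σ ∉ auxT m d (k+1) ∧ τ ∉ auxT m d (k+1) ∧ v ∉ σ ∧ τ = insert v σ := by
    intro k v hv hs ht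
    refine ⟨k, v, hv, hs.1, ht ▸ hs.2.2, ?_, ?_, hs.2.1, ht⟩
    · rw [auxT_succ m d k v hv]
      exact fun h => h.2 (Or.inl hs)
    · rw [auxT_succ m d k v hv]
      exact fun h => h.2 (Or.inr ⟨σ, hs, ht.symm⟩)
  have hlen : (listA m).length = m := by simp [listA]
  rcases h with ⟨i, hs, ht⟩ | ⟨i, hs, ht⟩
  · refine key i.val (Sum.inl i) ?_ ?_ ht
    · rw [auxL, List.getElem?_append_left (by rw [hlen]; exact i.2)]
      simp [listA]
    · have : (auxL m).take i.val = (listA m).take i.val := by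
        rw [auxL, List.take_append_of_le_length (by rw [hlen]; exact i.2.le)]
      rw [auxT, this]
      exact hs
  · refine key (m + i.val) (Sum.inr i) ?_ ?_ ht
    · rw [auxL, List.getElem?_append_right (by rw [hlen]; omega), hlen]
      simp [listB]
    · have h2 : (auxL m).take (m + i.val) = listA m ++ (listB m).take i.val := by
        rw [auxL, List.take_append, hlen, List.take_of_length_le (by rw [hlen]; omega)]
        simp
      have h3 : auxT m d (m + i.val) = phase (setM m d) ((listB m).take i.val) := by
        rw [auxT, h2, phase, List.foldl_append]
        rfl
      rw [h3]
      exact hs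

theorem aux_index (m d : ℕ) (σ : Finset (Fin m ⊕ Fin m)) (k l : ℕ)
    (h1 : σ ∈ auxT m d k) (h2 : σ ∉ auxT m d (k+1))
    (h3 : σ ∈ auxT m d l) (h4 : σ ∉ auxT m d (l+1)) : k = l := by
  rcases lt_trichotomy k l with h | h | h
  · exact absurd (auxT_anti m d (show k + 1 ≤ l from h) h3) h2
  · exact h
  · exact absurd (auxT_anti m d (show l + 1 ≤ k from h) h1) h4

/-- the map `μ` of the two-phase construction is an acyclic partial matching on
the face poset `P` of `Ind(G_m^d)`: matched pairs are covering pairs of `P`, every element of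
`P` lies in at most one pair, and there is no cycle
`μ(σ_1) ≻ σ_2, μ(σ_2) ≻ σ_3, …, μ(σ_t) ≻ σ_1` with `t ≥ 2` and `σ_1, …, σ_t` distinct. -/
theorem stmt0 (m d : ℕ) (hd : 1 ≤ d) (hdm : d ≤ m) :
    (∀ σ τ : Finset (Fin m ⊕ Fin m), MatchRel m d σ τ →
        σ ∈ faceP m d ∧ τ ∈ faceP m d ∧ σ ⊆ τ ∧ τ.card = σ.card + 1) ∧
    (∀ σ τ₁ τ₂ : Finset (Fin m ⊕ Fin m),
        MatchRel m d σ τ₁ → MatchRel m d σ τ₂ → τ₁ = τ₂) ∧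
    (∀ σ₁ σ₂ τ : Finset (Fin m ⊕ Fin m),
        MatchRel m d σ₁ τ → MatchRel m d σ₂ τ → σ₁ = σ₂) ∧
    (∀ σ τ ρ : Finset (Fin m ⊕ Fin m), MatchRel m d σ τ → ¬ MatchRel m d τ ρ) ∧
    ¬ ∃ (t : ℕ) (x τ : ZMod t → Finset (Fin m ⊕ Fin m)),
        2 ≤ t ∧ Function.Injective x ∧
        ∀ i : ZMod t, MatchRel m d (x i) (τ i) ∧
          x (i + 1) ⊆ τ i ∧ (τ i).card = (x (i + 1)).card + 1 := by
  have hP : ∀ k, auxT m d k ⊆ faceP m d := fun k =>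
    (auxT_anti m d (Nat.zero_le k)).trans (by simp [auxT, phase])
  refine ⟨?_, ?_, ?_, ?_, ?_⟩
  · intro σ τ h
    obtain ⟨k, v, hv, h1, h2, h3, h4, h5, h6⟩ := match_aux m d σ τ h
    refine ⟨hP k h1, hP k h2, ?_, ?_⟩
    · rw [h6]; exact Finset.subset_insert _ _
    · rw [h6, Finset.card_insert_of_notMem h5]
  · intro σ τ₁ τ₂ h h'
    obtain ⟨k, v, hv, h1, h2, h3, h4, h5, h6⟩ := match_aux m d _ _ h
    obtain ⟨k', v', hv', h1', h2', h3', h4', h5', h6'⟩ := match_aux m d _ _ h'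
    obtain rfl := aux_index m d σ k k' h1 h3 h1' h3'
    obtain rfl : v = v' := by simpa [hv] using hv'
    rw [h6, h6']
  · intro σ₁ σ₂ τ h h'
    obtain ⟨k, v, hv, h1, h2, h3, h4, h5, h6⟩ := match_aux m d _ _ h
    obtain ⟨k', v', hv', h1', h2', h3', h4', h5', h6'⟩ := match_aux m d _ _ h'
    obtain rfl := aux_index m d τ k k' h2 h4 h2' h4'
    obtain rfl : v = v' := by simpa [hv] using hv'
    rw [← Finset.erase_insert h5, ← Finset.erase_insert h5', ← h6, ← h6']
  · intro σ τ ρ h h'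
    obtain ⟨k, v, hv, h1, h2, h3, h4, h5, h6⟩ := match_aux m d _ _ h
    obtain ⟨k', v', hv', h1', h2', h3', h4', h5', h6'⟩ := match_aux m d _ _ h'
    obtain rfl := aux_index m d τ k k' h2 h4 h1' h3'
    obtain rfl : v = v' := by simpa [hv] using hv'
    exact h5' (by rw [h6]; exact Finset.mem_insert_self _ _)
  · rintro ⟨t, x, τ, ht, hinj, hx⟩
    haveI : NeZero t := ⟨by omega⟩
    haveI : Fact (1 < t) := ⟨by omega⟩
    choose kf vf hv h1 h2 h3 h4 h5 h6 using fun i => match_aux m d (x i) (τ i) (hx i).1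
    obtain ⟨i0, hmin⟩ := Finite.exists_min kf
    have hT : ∀ i, x i ∈ auxT m d (kf i0) := fun i => auxT_anti m d (hmin i) (h1 i)
    have claim : ∀ n : ℕ, vf i0 ∈ x (i0 + 1 + (n : ZMod t)) := by
      intro n
      induction n with
      | zero =>
        by_contra hn
        simp only [Nat.cast_zero, add_zero] at hn
        have hsub : x (i0 + 1) ⊆ x i0 := by
          intro y hy
          have hy' := (hx i0).2.1 hy
          rw [h6 i0, Finset.mem_insert] at hy'
          rcases hy' with rfl | hy'
          · exact absurd hy hn
          · exact hy'
        have hc := (hx i0).2.2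
        rw [h6 i0, Finset.card_insert_of_notMem (h5 i0)] at hc
        have he := hinj (Finset.eq_of_subset_of_card_le hsub (by omega))
        simp at he
      | succ n ih =>
        push_cast
        rw [← add_assoc]
        generalize i0 + 1 + (n : ZMod t) = j at ih
        by_contra hn
        have hne : kf i0 ≠ kf j := by
          intro he
          have hvv : vf i0 = vf j := by
            have := hv i0
            rw [he, hv j] at this
            exact (Option.some.inj this).symm
          exact h5 j (hvv ▸ ih)
        have hlt : kf i0 + 1 ≤ kf j := lt_of_le_of_ne (hmin j) hne
        have hτ := auxT_anti m d hlt (h2 j)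
        have hτ0 := auxT_anti m d (hmin j) (h2 j)
        have hmem : vf i0 ∈ τ j := by
          rw [h6 j]; exact Finset.mem_insert_of_mem ih
        have heq : insert (vf i0) (x (j + 1)) = τ j := by
          apply Finset.eq_of_subset_of_card_le
          · exact Finset.insert_subset hmem (hx j).2.1
          · rw [Finset.card_insert_of_notMem hn, (hx j).2.2]
        rw [auxT_succ m d _ _ (hv i0)] at hτ
        exact hτ.2 (Or.inr ⟨x (j + 1), ⟨hT _, hn, heq ▸ hτ0⟩, heq⟩)
    have hfin := claim (t - 1)
    have : i0 + 1 + ((t - 1 : ℕ) : ZMod t) = i0 := by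
      rw [Nat.cast_sub (by omega)]
      simp
    rw [this] at hfin
    exact h5 i0 hfin
end

section
/- Every critical cell σ of the matching μ on the face poset of Ind(G_m^d) satisfies σ ⊆ B, and every vertex a ∈ A is adjacent to some vertex of σ (equivalently, σ ∪ {a} is not an independent set for any a ∈ A). -/
open Finset

theorem adj_inl_inl (m d : ℕ) (i j : Fin m) : ¬ (Gmd m d).Adj (Sum.inl i) (Sum.inl j) := by
  simp [Gmd, SimpleGraph.fromRel_adj]

theorem isInd_insert (m d : ℕ) (i : Fin m) (σ : Finset (Fin m ⊕ Fin m)) :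
    IsInd m d (insert (Sum.inl i) σ) ↔
      IsInd m d σ ∧ ∀ v ∈ σ, ¬ (Gmd m d).Adj (Sum.inl i) v := by
  constructor
  · intro h
    exact ⟨fun u hu v hv => h u (mem_insert_of_mem hu) v (mem_insert_of_mem hv),
      fun v hv => h _ (mem_insert_self _ _) v (mem_insert_of_mem hv)⟩
  · rintro ⟨h1, h2⟩ u hu v hv
    rcases mem_insert.1 hu with rfl | hu
    · rcases mem_insert.1 hv with rfl | hv
      · exact adj_inl_inl m d i i
      · exact h2 v hv
    · rcases mem_insert.1 hv with rfl | hv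
      · exact fun h => h2 u hu h.symm
      · exact h1 u hu v hv

/-- Survivors of phase one along a list of `A`-vertices. -/
theorem phase_char (m d : ℕ) (l : List (Fin m)) :
    phase (faceP m d) (l.map Sum.inl) =
      {σ | IsInd m d σ ∧ ∀ i ∈ l, ¬ IsInd m d (insert (Sum.inl i) σ)} := by
  induction l using List.reverseRecOn with
  | nil => simp [phase, faceP]
  | append_singleton l x ih =>
    have e : phase (faceP m d) ((l ++ [x]).map Sum.inl) =
        stepSurv (Sum.inl x) (phase (faceP m d) (l.map Sum.inl)) := by
      simp [phase]
    rw [e, ih]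
    ext σ
    constructor
    · rintro ⟨⟨h1, h2⟩, h3⟩
      refine ⟨h1, fun i hi hx => ?_⟩
      rcases List.mem_append.1 hi with hi | hi
      · exact h2 i hi hx
      · obtain rfl : i = x := by simpa using hi
        apply h3
        by_cases hm : Sum.inl i ∈ σ
        · right
          have hee : insert (Sum.inl i) (σ.erase (Sum.inl i)) = σ := insert_erase hm
          refine ⟨σ.erase (Sum.inl i), ⟨⟨?_, ?_⟩, notMem_erase _ _, ?_⟩, hee⟩
          · exact fun u hu v hv => h1 u (mem_of_mem_erase hu) v (mem_of_mem_erase hv)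
          · intro j hj hc
            apply h2 j hj
            rw [isInd_insert] at hc ⊢
            refine ⟨h1, fun v hv => ?_⟩
            by_cases hvi : v = Sum.inl i
            · subst hvi
              exact adj_inl_inl m d j i
            · exact hc.2 v (mem_erase.2 ⟨hvi, hv⟩)
          · rw [hee]
            exact ⟨h1, h2⟩
        · left
          refine ⟨⟨h1, h2⟩, hm, hx, fun j hj hc => h2 j hj ?_⟩
          rw [isInd_insert] at hc ⊢
          exact ⟨h1, fun v hv => hc.2 v (mem_insert_of_mem hv)⟩
    · rintro ⟨h1, h2⟩
      have hx := h2 x (by simp)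
      refine ⟨⟨h1, fun i hi => h2 i (by simp [hi])⟩, ?_⟩
      rintro (h | ⟨τ, h, rfl⟩)
      · exact hx h.2.2.1
      · exact hx (by rw [insert_idem]; exact h1)

theorem mem_phase_take (m d : ℕ) (σ : Finset (Fin m ⊕ Fin m)) (hσ : σ ∈ setC m d) (n : ℕ)
    (hn : n ≤ m) : σ ∈ phase (faceP m d) ((listA m).take n) := by
  induction n with
  | zero => simpa [phase] using hσ.1
  | succ n ih =>
    have hlen : n < (listA m).length := by simp [listA]; omega
    have e : (listA m).take (n + 1) = (listA m).take n ++ [Sum.inl ⟨n, hn⟩] := by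
      rw [List.take_succ_eq_append_getElem hlen]
      simp [listA]
    have e2 : phase (faceP m d) ((listA m).take (n + 1)) =
        stepSurv (Sum.inl ⟨n, hn⟩) (phase (faceP m d) ((listA m).take n)) := by
      rw [e]; simp [phase]
    rw [e2]
    refine ⟨ih (by omega), fun h => hσ.2 (Or.inl (Set.mem_iUnion.2 ⟨⟨n, hn⟩, ?_⟩))⟩
    exact h

/-- every critical cell `σ` satisfies `σ ⊆ B`, and every vertex `a ∈ A` is
adjacent to some vertex of `σ` (equivalently, `σ ∪ {a}` is not independent for any `a ∈ A`). -/
theorem stmt2 (m d : ℕ) (hd : 1 ≤ d) (hdm : d ≤ m)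
    (σ : Finset (Fin m ⊕ Fin m)) (hσ : σ ∈ setC m d) :
    onlyB m σ ∧
    (∀ i : Fin m, ∃ v ∈ σ, (Gmd m d).Adj (Sum.inl i) v) ∧
    (∀ i : Fin m, ¬ IsInd m d (insert (Sum.inl i) σ)) := by
  have h := mem_phase_take m d σ hσ m le_rfl
  rw [List.take_of_length_le (by simp [listA]), listA, phase_char] at h
  obtain ⟨h1, h2⟩ := h
  have h3 : ∀ i : Fin m, ¬ IsInd m d (insert (Sum.inl i) σ) := fun i => h2 i (by simp)
  refine ⟨?_, ?_, h3⟩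
  · rintro (i | j) hv
    · exact absurd (by rwa [insert_eq_of_mem hv]) (h3 i)
    · exact ⟨j, rfl⟩
  · intro i
    by_contra hc
    push Not at hc
    exact h3 i ((isInd_insert m d i σ).2 ⟨h1, hc⟩)
end

section
/- Let σ be a nonempty subset of B such that σ ∪ {a} is an independent set of G_m^d for some a ∈ A. Then there exists s ∈ {1,…,m} with b_s ∈ σ and σ ⊆ B_s. -/
open Finset

/-- if `σ` is a nonempty subset of `B` and `σ ∪ {a}` is independent for
some `a ∈ A`, then there is `s` with `b_s ∈ σ` and `σ ⊆ B_s`. -/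
theorem stmt4 (m d : ℕ) (hd : 1 ≤ d) (hdm : d ≤ m)
    (σ : Finset (Fin m ⊕ Fin m)) (hne : σ.Nonempty) (hB : onlyB m σ)
    (h : ∃ i : Fin m, IsInd m d (insert (Sum.inl i) σ)) :
    ∃ s : Fin m, Sum.inr s ∈ σ ∧ σ ⊆ Bset m d s := by
  obtain ⟨i, hi⟩ := h
  have key : ∀ a b : Fin m, (b.val ≤ a.val ∧ (a.val + m - b.val) % m = a.val - b.val) ∨
      (a.val < b.val ∧ (a.val + m - b.val) % m = a.val + m - b.val) := by
    intro a b
    have ha := a.isLt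
    have hb := b.isLt
    rcases Nat.lt_or_ge a.val b.val with hab | hab
    · right
      exact ⟨hab, Nat.mod_eq_of_lt (by omega)⟩
    · left
      refine ⟨hab, ?_⟩
      have e : a.val + m - b.val = (a.val - b.val) + m := by omega
      rw [e, Nat.add_mod_right]
      exact Nat.mod_eq_of_lt (by omega)
  have hge : ∀ j : Fin m, Sum.inr j ∈ σ → d ≤ (j.val + m - i.val) % m := by
    intro j hj
    by_contra hlt
    refine hi (Sum.inl i) (Finset.mem_insert_self _ _) (Sum.inr j)
      (Finset.mem_insert_of_mem hj) ?_
    unfold Gmd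
    rw [SimpleGraph.fromRel_adj]
    exact ⟨by simp, Or.inl ⟨i, j, rfl, rfl, by omega⟩⟩
  obtain ⟨v, hv, hmin⟩ := Finset.exists_min_image σ
    (fun v => Sum.elim (fun _ => 0) (fun j : Fin m => (j.val + m - i.val) % m) v) hne
  obtain ⟨s, rfl⟩ := hB v hv
  refine ⟨s, hv, ?_⟩
  intro w hw
  obtain ⟨j, rfl⟩ := hB w hw
  have h1 := hmin _ hw
  simp only [Sum.elim_inr] at h1
  have h2 := hge s hv
  have k1 := key s i
  have k2 := key j i
  have k3 := key j s
  have hj := j.isLt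
  have hs := s.isLt
  have hi' := i.isLt
  unfold Bset
  refine Finset.mem_image.2 ⟨j, Finset.mem_filter.2 ⟨Finset.mem_univ _, ?_⟩, rfl⟩
  omega
end

section
/- For every s ∈ {1,…,m}, the set B_s is disjoint from the neighborhood of the vertex a_{s+m−d} (subscript modulo m); consequently, for any σ ⊆ B_s, the set σ ∪ {a_{s+m−d}} is an independent set of G_m^d. -/
open Finset

/-- `B_s` is disjoint from the neighbourhood of `a_{s+m-d}` (0-based: the
`a`-vertex with index `(s + m - d) mod m`); consequently `σ ∪ {a_{s+m-d}}` is independent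
for every `σ ⊆ B_s`. -/
theorem stmt5 (m d : ℕ) (hd : 1 ≤ d) (hdm : d ≤ m) (s av : Fin m)
    (hav : av.val = (s.val + m - d) % m) :
    (∀ v ∈ Bset m d s, ¬ (Gmd m d).Adj (Sum.inl av) v) ∧
    (∀ σ : Finset (Fin m ⊕ Fin m), σ ⊆ Bset m d s →
      IsInd m d (insert (Sum.inl av) σ)) := by
  have key : ∀ x : ℕ, x < 2 * m → (x < m ∧ x % m = x) ∨ (m ≤ x ∧ x % m = x - m) := by
    intro x hx
    rcases lt_or_ge x m with h | h
    · exact Or.inl ⟨h, Nat.mod_eq_of_lt h⟩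
    · refine Or.inr ⟨h, ?_⟩
      rw [Nat.mod_eq_sub_mod h, Nat.mod_eq_of_lt (by omega)]
  have h1 : ∀ v ∈ Bset m d s, ¬ (Gmd m d).Adj (Sum.inl av) v := by
    intro v hv hadj
    simp only [Bset, Finset.mem_image, Finset.mem_filter, Finset.mem_univ, true_and] at hv
    obtain ⟨j, hj, rfl⟩ := hv
    have hlt : (j.val + m - av.val) % m < d := by
      simpa [Gmd, SimpleGraph.fromRel_adj] using hadj
    have := j.isLt
    have := s.isLt
    have := av.isLt
    rcases key (j.val + m - av.val) (by omega) with h | h <;>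
    rcases key (j.val + m - s.val) (by omega) with h' | h' <;>
    rcases key (s.val + m - d) (by omega) with h'' | h'' <;> omega
  refine ⟨h1, ?_⟩
  intro σ hσ u hu v hv hadj
  have hB : ∀ w ∈ σ, ∃ j : Fin m, w = Sum.inr j := by
    intro w hw
    have h := hσ hw
    simp only [Bset, Finset.mem_image] at h
    obtain ⟨j, -, rfl⟩ := h
    exact ⟨j, rfl⟩
  rcases Finset.mem_insert.mp hu with rfl | hu
  · rcases Finset.mem_insert.mp hv with rfl | hv
    · exact (Gmd m d).loopless.irrefl _ hadj
    · exact h1 v (hσ hv) hadj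
  · rcases Finset.mem_insert.mp hv with rfl | hv
    · exact h1 u (hσ hu) hadj.symm
    · obtain ⟨i, rfl⟩ := hB u hu
      obtain ⟨j, rfl⟩ := hB v hv
      simp [Gmd, SimpleGraph.fromRel_adj] at hadj
end

section
/- For any subset σ ⊆ B: σ belongs to M (the set of simplices surviving the first phase of the matching construction) if and only if σ is not contained in B_s for any s ∈ {1,…,m}. -/
open Finset

theorem phase_sub {α : Type*} [DecidableEq α] (l : List α) :
    ∀ T : Set (Finset α), phase T l ⊆ T := by
  induction l with
  | nil => intro T; exact subset_rfl
  | cons x l ih => intro T; exact (ih (stepSurv x T)).trans (stepSurv_sub x T)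

theorem mem_phase {α : Type*} [DecidableEq α] (τ : Finset α) (l : List α) :
    ∀ T : Set (Finset α), τ ∈ T → (∀ x ∈ l, x ∉ τ ∧ insert x τ ∉ T) → τ ∈ phase T l := by
  induction l with
  | nil => intro T h _; exact h
  | cons x l ih =>
    intro T h hx
    refine ih (stepSurv x T) ⟨h, ?_⟩ ?_
    · rintro (h1 | ⟨ρ, _, rfl⟩)
      · exact (hx x (by simp)).2 h1.2.2
      · exact (hx x (by simp)).1 (by simp)
    · intro y hy
      exact ⟨(hx y (by simp [hy])).1,
        fun h2 => (hx y (by simp [hy])).2 (stepSurv_sub x T h2)⟩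

theorem not_mem_phase {α : Type*} [DecidableEq α] (P : Set (Finset α))
    (hP : ∀ ρ τ : Finset α, ρ ⊆ τ → τ ∈ P → ρ ∈ P) (σ : Finset α) (l : List α) :
    ∀ T : Set (Finset α), T ⊆ P → (∀ y ∈ l, insert y σ ∈ P → insert y σ ∈ T) →
      (∀ y ∈ l, y ∉ σ) → (∃ y ∈ l, insert y σ ∈ P) → σ ∉ phase T l := by
  induction l with
  | nil => intro T _ _ _ h; simp at h
  | cons x l ih =>
    intro T hT hI hn hex
    by_cases hx : insert x σ ∈ P
    · intro h
      have h1 : σ ∈ stepSurv x T := phase_sub l _ h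
      exact h1.2 (Or.inl ⟨h1.1, hn x (by simp), hI x (by simp) hx⟩)
    · refine ih (stepSurv x T) ((stepSurv_sub x T).trans hT) ?_
        (fun y hy => hn y (by simp [hy])) ?_
      · intro y hy hyP
        refine ⟨hI y (by simp [hy]) hyP, ?_⟩
        rintro (h1 | ⟨ρ, _, h2⟩)
        · exact hx (hP _ _ (Finset.insert_subset_insert x (Finset.subset_insert y σ))
            (hT h1.2.2))
        · have h3 : x ∈ insert y σ := by rw [← h2]; simp
          rcases Finset.mem_insert.1 h3 with rfl | h4
          · exact hx hyP
          · exact hn x (by simp) h4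
      · obtain ⟨y, hy, hyP⟩ := hex
        rcases List.mem_cons.1 hy with rfl | hy
        · exact absurd hyP hx
        · exact ⟨y, hy, hyP⟩

theorem faceP_down (m d : ℕ) (ρ τ : Finset (Fin m ⊕ Fin m)) (h : ρ ⊆ τ)
    (hτ : τ ∈ faceP m d) : ρ ∈ faceP m d :=
  fun u hu v hv => hτ u (h hu) v (h hv)

theorem onlyB_mem (m d : ℕ) (σ : Finset (Fin m ⊕ Fin m)) (hB : onlyB m σ) :
    σ ∈ faceP m d := by
  intro u hu v hv h
  obtain ⟨j, rfl⟩ := hB u hu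
  obtain ⟨k, rfl⟩ := hB v hv
  simp [Gmd] at h

theorem insert_mem (m d : ℕ) (σ : Finset (Fin m ⊕ Fin m)) (hB : onlyB m σ) (i : Fin m) :
    insert (Sum.inl i) σ ∈ faceP m d ↔
      ∀ j : Fin m, Sum.inr j ∈ σ → ¬ (j.val + m - i.val) % m < d := by
  constructor
  · intro h j hj hlt
    refine h (Sum.inl i) (by simp) (Sum.inr j) (by simp [hj]) ?_
    simp [Gmd, hlt]
  · intro h u hu v hv hadj
    rcases Finset.mem_insert.1 hu with rfl | hu <;> rcases Finset.mem_insert.1 hv with rfl | hv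
    · simp at hadj
    · obtain ⟨j, rfl⟩ := hB v hv
      simp [Gmd] at hadj
      exact h j hv (by omega)
    · obtain ⟨j, rfl⟩ := hB u hu
      simp [Gmd] at hadj
      exact h j hu (by omega)
    · exact onlyB_mem m d σ hB u hu v hv hadj

theorem mod_two (m a : ℕ) (h : a < 2 * m) : a % m = if a < m then a else a - m := by
  split_ifs with h1
  · exact Nat.mod_eq_of_lt h1
  · rw [Nat.mod_eq_sub_mod (by omega), Nat.mod_eq_of_lt (by omega)]

theorem arith (m d i s j : ℕ) (hd : 1 ≤ d) (hdm : d ≤ m) (hi : i < m) (hs : s < m) (hj : j < m)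
    (h : s = i + d ∨ s + m = i + d) :
    ¬ (j + m - i) % m < d ↔ (j + m - s) % m < m - d := by
  rw [mod_two m (j + m - i) (by omega), mod_two m (j + m - s) (by omega)]
  split_ifs <;> omega

theorem sub_Bset (m d : ℕ) (σ : Finset (Fin m ⊕ Fin m)) (hB : onlyB m σ) (s : Fin m) :
    σ ⊆ Bset m d s ↔ ∀ j : Fin m, Sum.inr j ∈ σ → (j.val + m - s.val) % m < m - d := by
  constructor
  · intro h j hj
    simpa [Bset] using h hj
  · intro h v hv
    obtain ⟨j, rfl⟩ := hB v hv
    simpa [Bset] using h j hv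

theorem exists_iff (m d : ℕ) (hd : 1 ≤ d) (hdm : d ≤ m)
    (σ : Finset (Fin m ⊕ Fin m)) (hB : onlyB m σ) :
    (∃ i : Fin m, insert (Sum.inl i) σ ∈ faceP m d) ↔ ∃ s : Fin m, σ ⊆ Bset m d s := by
  have key : ∀ i s : Fin m, (s.val = i.val + d ∨ s.val + m = i.val + d) →
      (insert (Sum.inl i) σ ∈ faceP m d ↔ σ ⊆ Bset m d s) := by
    intro i s h
    rw [insert_mem m d σ hB, sub_Bset m d σ hB]
    exact forall_congr' fun j => imp_congr_right fun _ =>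
      arith m d i s j hd hdm i.2 s.2 j.2 h
  constructor
  · rintro ⟨i, hi⟩
    by_cases h : i.val + d < m
    · exact ⟨⟨i.val + d, h⟩, (key i _ (Or.inl rfl)).1 hi⟩
    · exact ⟨⟨i.val + d - m, by omega⟩, (key i _ (Or.inr (by simp only; omega))).1 hi⟩
  · rintro ⟨s, hs⟩
    by_cases h : d ≤ s.val
    · exact ⟨⟨s.val - d, by omega⟩, (key _ s (Or.inl (by simp only; omega))).2 hs⟩
    · exact ⟨⟨s.val + m - d, by omega⟩, (key _ s (Or.inr (by simp only; omega))).2 hs⟩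

/-- for `σ ⊆ B`, `σ ∈ M` iff `σ` is not contained in any `B_s`. -/
theorem stmt6 (m d : ℕ) (hd : 1 ≤ d) (hdm : d ≤ m)
    (σ : Finset (Fin m ⊕ Fin m)) (hB : onlyB m σ) :
    σ ∈ setM m d ↔ ∀ s : Fin m, ¬ σ ⊆ Bset m d s := by
  rw [← not_exists, ← exists_iff m d hd hdm σ hB]
  have hn : ∀ y ∈ listA m, y ∉ σ := by
    intro y hy hyσ
    obtain ⟨j, rfl⟩ := hB y hyσ
    simp [listA] at hy
  constructor
  · rintro h ⟨i, hi⟩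
    exact not_mem_phase (faceP m d) (faceP_down m d) σ (listA m) (faceP m d) subset_rfl
      (fun _ _ h => h) hn ⟨Sum.inl i, by simp [listA], hi⟩ h
  · intro h
    refine mem_phase σ (listA m) (faceP m d) (onlyB_mem m d σ hB) fun x hx => ⟨hn x hx, ?_⟩
    intro hP
    simp only [listA, List.mem_map] at hx
    obtain ⟨i, _, rfl⟩ := hx
    exact h ⟨i, hP⟩
end

section
/- Let σ = {b_{1}, b_{j_2}, …, b_k} ⊆ B with subscripts 1 < j_2 < … < k ≤ m, such that σ is not contained in B_s for any s ∈ {1,…,m}. Assume j_2 ≤ d+1 and k = j_2 + m − d − 1. Then for every i ∈ {2,…,m} with b_i ∉ σ and either i > k or 2 ≤ i ≤ j_2 − 1, the set (σ ∪ {b_i}) \ {b_1} is not contained in B_s for any s ∈ {1,…,m}. -/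
open Finset

theorem Bset_mem_iff_aux (m d : ℕ) (s j : Fin m) :
    Sum.inr j ∈ Bset m d s ↔
      ((s.val ≤ j.val ∧ j.val - s.val < m - d) ∨ (j.val < s.val ∧ j.val + m - s.val < m - d)) := by
  have h1 : Sum.inr j ∈ Bset m d s ↔ (j.val + m - s.val) % m < m - d := by
    simp [Bset]
  rw [h1]
  have hj := j.isLt
  have hs := s.isLt
  rcases le_or_gt s.val j.val with h | h
  · have : (j.val + m - s.val) % m = j.val - s.val := by
      rw [show j.val + m - s.val = (j.val - s.val) + m by omega, Nat.add_mod_right,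
        Nat.mod_eq_of_lt (by omega)]
    rw [this]; omega
  · rw [Nat.mod_eq_of_lt (by omega)]; omega

/-- 0-based indices: let `σ = {b_0, b_{j2}, …, b_k} ⊆ B` (with `0 < j2` the
second-smallest and `k` the largest subscript) be contained in no `B_s`; assume `j2 ≤ d` and
`k = j2 + m - d - 1`.  Then for every `i` with `0 < i`, `b_i ∉ σ` and either `i > k` or
`i < j2`, the set `(σ ∪ {b_i}) \ {b_0}` is contained in no `B_s`. -/
theorem stmt7 (m d : ℕ) (hd : 1 ≤ d) (hdm : d ≤ m)
    (σ : Finset (Fin m ⊕ Fin m)) (hB : onlyB m σ) (j2 k : ℕ)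
    (h0 : hasB m σ 0)
    (hj2mem : hasB m σ j2) (hj2pos : 0 < j2)
    (hj2min : ∀ j : Fin m, Sum.inr j ∈ σ → j.val = 0 ∨ j2 ≤ j.val)
    (hkmem : hasB m σ k)
    (hkmax : ∀ j : Fin m, Sum.inr j ∈ σ → j.val ≤ k)
    (hM : ∀ s : Fin m, ¬ σ ⊆ Bset m d s)
    (hj2d : j2 ≤ d) (hk : k = j2 + m - d - 1) :
    ∀ i : Fin m, 0 < i.val → Sum.inr i ∉ σ → (k < i.val ∨ i.val < j2) →
      ∀ j0 : Fin m, j0.val = 0 →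
        ∀ s : Fin m, ¬ (insert (Sum.inr i) σ).erase (Sum.inr j0) ⊆ Bset m d s := by
  intro i hi hiσ hik j0 hj0 s hs
  obtain ⟨a, ha, haσ⟩ := hj2mem
  obtain ⟨b, hb, hbσ⟩ := hkmem
  have key : ∀ x : Fin m, x.val ≠ 0 → (x = i ∨ Sum.inr x ∈ σ) → Sum.inr x ∈ Bset m d s := by
    intro x hx h
    apply hs
    rw [Finset.mem_erase, Finset.mem_insert]
    refine ⟨?_, ?_⟩
    · intro h'
      have := Sum.inr.inj h'
      subst this
      exact hx hj0
    · rcases h with h | h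
      · left; rw [h]
      · right; exact h
  have hI := (Bset_mem_iff_aux m d s i).1 (key i (by omega) (Or.inl rfl))
  have hA := (Bset_mem_iff_aux m d s a).1 (key a (by omega) (Or.inr haσ))
  have hK := (Bset_mem_iff_aux m d s b).1 (key b (by omega) (Or.inr hbσ))
  apply hM s
  intro v hv
  obtain ⟨x, rfl⟩ := hB v hv
  by_cases hx : x.val = 0
  · rw [Bset_mem_iff_aux]
    have h1 := i.isLt
    have h2 := s.isLt
    have h3 := b.isLt
    omega
  · exact key x hx (Or.inr hv)
end

section
/- Let σ = {b_{1}, b_{j_2}, …, b_k} ⊆ B with subscripts 1 < j_2 < … < k ≤ m, such that σ is not contained in B_s for any s ∈ {1,…,m}. Assume j_2 ≤ d+1 and k = j_2 + m − d − 1. Then for every i ∈ {j_2+1,…,d+1} with b_i ∉ σ, the set (σ ∪ {b_i}) \ {b_{j_2}} is not contained in B_s for any s ∈ {1,…,m}. -/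
open Finset

/-- 0-based indices: let `σ = {b_0, b_{j2}, …, b_k} ⊆ B` (with `0 < j2` the
second-smallest and `k` the largest subscript) be contained in no `B_s`; assume `j2 ≤ d` and
`k = j2 + m - d - 1`.  Then for every `i ∈ {j2+1, …, d}` with `b_i ∉ σ`, the set
`(σ ∪ {b_i}) \ {b_{j2}}` is contained in no `B_s`. -/
theorem stmt8 (m d : ℕ) (hd : 1 ≤ d) (hdm : d ≤ m)
    (σ : Finset (Fin m ⊕ Fin m)) (hB : onlyB m σ) (j2 k : ℕ)
    (h0 : hasB m σ 0)
    (hj2mem : hasB m σ j2) (hj2pos : 0 < j2)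
    (hj2min : ∀ j : Fin m, Sum.inr j ∈ σ → j.val = 0 ∨ j2 ≤ j.val)
    (hkmem : hasB m σ k)
    (hkmax : ∀ j : Fin m, Sum.inr j ∈ σ → j.val ≤ k)
    (hM : ∀ s : Fin m, ¬ σ ⊆ Bset m d s)
    (hj2d : j2 ≤ d) (hk : k = j2 + m - d - 1) :
    ∀ i : Fin m, j2 < i.val → i.val ≤ d → Sum.inr i ∉ σ →
      ∀ jj : Fin m, jj.val = j2 →
        ∀ s : Fin m, ¬ (insert (Sum.inr i) σ).erase (Sum.inr jj) ⊆ Bset m d s := by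
  intro i hji hid hiσ jj hjj s hsub
  have key : ∀ j : Fin m, Sum.inr j ∈ Bset m d s ↔ (j.val + m - s.val) % m < m - d := by
    intro j
    simp [Bset]
  apply hM s
  have hi : (i.val + m - s.val) % m < m - d := by
    rw [← key]
    apply hsub
    rw [Finset.mem_erase]
    refine ⟨?_, Finset.mem_insert_self _ _⟩
    intro h
    have h1 := Sum.inr.inj h
    subst h1
    omega
  obtain ⟨z, hz, hzσ⟩ := h0
  have h0' : (z.val + m - s.val) % m < m - d := by
    rw [← key]
    apply hsub
    rw [Finset.mem_erase]
    refine ⟨?_, Finset.mem_insert_of_mem hzσ⟩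
    intro h
    have h1 := Sum.inr.inj h
    subst h1
    omega
  have hjB : Sum.inr jj ∈ Bset m d s := by
    rw [key]
    have hs := s.isLt
    have him := i.isLt
    rw [hz] at h0'
    by_cases hs0 : s.val = 0
    · rw [hs0, Nat.sub_zero, Nat.add_mod_right, Nat.mod_eq_of_lt (by omega)] at hi ⊢
      omega
    · rw [Nat.mod_eq_of_lt (by omega)] at h0'
      rw [Nat.mod_eq_of_lt (by omega)] at hi ⊢
      omega
  intro v hv
  by_cases hvj : v = Sum.inr jj
  · rw [hvj]
    exact hjB
  · exact hsub (Finset.mem_erase.2 ⟨hvj, Finset.mem_insert_of_mem hv⟩)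
end

section
/- Write m = t(d+1) + α with t ≥ 1 and 0 ≤ α ≤ d, and let 1 ≤ l < t. Let σ ⊆ B be a simplex in M satisfying property P_l (with associated subscripts i_r = 1 + (r−1)(d+1) and j_r = j_1 + (r−1)(d+1)). Then σ ∉ 𝒮_{b_i} for all i ∈ {1,…,i_{l+1}} (where i_{l+1} = 1 + l(d+1)) if and only if: (1) b_{i_{l+1}} ∈ σ; (2) σ \ {b_{i_{l+1}}} ∉ M; and (3) b_s ∉ σ for every s ∈ {1,…,m} \ {i_{l+1}} with j_l < s < j_{l+1}. -/
open Finset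

lemma mem_stepSurv {α : Type*} [DecidableEq α] (x : α) (T : Set (Finset α)) (σ : Finset α) :
    σ ∈ stepSurv x T ↔ σ ∈ T ∧ ¬ (x ∉ σ ∧ insert x σ ∈ T) ∧ ¬ (x ∈ σ ∧ σ.erase x ∈ T) := by
  unfold stepSurv stepS
  simp only [Set.mem_sdiff, Set.mem_union, Set.mem_ofPred_eq, Set.mem_image, not_or]
  constructor
  · rintro ⟨h, h1, h2⟩
    refine ⟨h, fun h3 => h1 ⟨h, h3⟩, fun h3 => h2 ⟨σ.erase x, ⟨h3.2, by simp, ?_⟩, ?_⟩⟩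
    · rw [Finset.insert_erase h3.1]; exact h
    · exact Finset.insert_erase h3.1
  · rintro ⟨h, h1, h2⟩
    refine ⟨h, fun h3 => h1 h3.2, ?_⟩
    rintro ⟨τ, ⟨ht, hx, hi⟩, rfl⟩
    exact h2 ⟨by simp, by rw [Finset.erase_insert hx]; exact ht⟩

lemma phase_succ {α : Type*} [DecidableEq α] (T : Set (Finset α)) (l : List α) (n : ℕ)
    (h : n < l.length) :
    phase T (l.take (n+1)) = stepSurv l[n] (phase T (l.take n)) := by
  unfold phase
  rw [List.take_succ_eq_append_getElem h, List.foldl_append]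
  rfl

/-- Window membership: `b_j` is a neighbour of `a_i`. -/
def nb (m d i j : ℕ) : Prop := (j + m - i) % m < d

lemma adj_iff (m d : ℕ) (u v : Fin m ⊕ Fin m) : (Gmd m d).Adj u v ↔
    (∃ i j : Fin m, u = Sum.inl i ∧ v = Sum.inr j ∧ nb m d i j) ∨
    (∃ i j : Fin m, v = Sum.inl i ∧ u = Sum.inr j ∧ nb m d i j) := by
  unfold Gmd nb
  rw [SimpleGraph.fromRel_adj]
  constructor
  · rintro ⟨_, h⟩; exact h
  · intro h
    refine ⟨?_, h⟩
    rcases h with ⟨i, j, rfl, rfl, _⟩ | ⟨i, j, rfl, rfl, _⟩ <;> simp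

lemma isInd_iff (m d : ℕ) (σ : Finset (Fin m ⊕ Fin m)) : IsInd m d σ ↔
    ∀ i j : Fin m, Sum.inl i ∈ σ → Sum.inr j ∈ σ → ¬ nb m d i j := by
  unfold IsInd
  constructor
  · intro h i j hi hj hn
    exact h _ hi _ hj ((adj_iff _ _ _ _).2 (Or.inl ⟨i, j, rfl, rfl, hn⟩))
  · intro h u hu v hv ha
    rcases (adj_iff _ _ _ _).1 ha with ⟨i, j, rfl, rfl, hn⟩ | ⟨i, j, rfl, rfl, hn⟩
    · exact h i j hu hv hn
    · exact h i j hv hu hn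

lemma phaseA_iff (m d : ℕ) (n : ℕ) (hn : n ≤ m) : ∀ σ : Finset (Fin m ⊕ Fin m),
    σ ∈ phase (faceP m d) ((listA m).take n) ↔
      IsInd m d σ ∧ ∀ i : Fin m, i.val < n → ∃ j : Fin m, Sum.inr j ∈ σ ∧ nb m d i j := by
  induction n with
  | zero => intro σ; simp [phase, faceP]
  | succ n ih =>
    intro σ
    have ih := ih (by omega)
    have hlen : n < (listA m).length := by simp [listA]; omega
    have hget : (listA m)[n] = Sum.inl (⟨n, by omega⟩ : Fin m) := by simp [listA]
    rw [phase_succ _ _ _ hlen, mem_stepSurv, hget, ih, ih, ih]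
    simp only [isInd_iff]
    constructor
    · rintro ⟨⟨h1, h2⟩, h3, h4⟩
      refine ⟨h1, fun i hi => ?_⟩
      by_cases hi' : i.val < n
      · exact h2 i hi'
      have : (⟨n, by omega⟩ : Fin m) = i := by ext; simp; omega
      rw [← this]
      by_contra hcon
      push Not at hcon
      by_cases hmem : (Sum.inl (⟨n, by omega⟩ : Fin m)) ∈ σ
      · apply h4
        refine ⟨hmem, ?_, ?_⟩
        · intro i j hi hj
          exact h1 i j (Finset.mem_of_mem_erase hi) (Finset.mem_of_mem_erase hj)
        · intro i hi
          obtain ⟨j, hj, hj'⟩ := h2 i hi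
          exact ⟨j, by simp [hj], hj'⟩
      · apply h3
        refine ⟨hmem, ?_, ?_⟩
        · intro i j hi hj
          simp at hi hj
          rcases hi with rfl | hi
          · exact hcon j hj
          · exact h1 i j hi hj
        · intro i hi
          obtain ⟨j, hj, hj'⟩ := h2 i hi
          exact ⟨j, by simp [hj], hj'⟩
    · rintro ⟨h1, h2⟩
      refine ⟨⟨h1, fun i hi => h2 i (by omega)⟩, ?_, ?_⟩
      · rintro ⟨_, h3, _⟩
        obtain ⟨j, hj, hj'⟩ := h2 ⟨n, by omega⟩ (by simp)
        exact h3 ⟨n, by omega⟩ j (by simp) (by simp [hj]) hj'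
      · rintro ⟨h3, _⟩
        obtain ⟨j, hj, hj'⟩ := h2 ⟨n, by omega⟩ (by simp)
        exact h1 _ j h3 hj hj'

lemma nb_iff (m d i j : ℕ) (hdm : d ≤ m) (hi : i < m) (hj : j < m) :
    nb m d i j ↔ (i ≤ j ∧ j < i + d) ∨ j + m < i + d := by
  unfold nb
  by_cases h : i ≤ j
  · have : (j + m - i) % m = j - i := by
      rw [show j + m - i = (j - i) + m by omega, Nat.add_mod_right, Nat.mod_eq_of_lt (by omega)]
    omega
  · rw [Nat.mod_eq_of_lt (by omega)]; omega

lemma mem_setM_iff (m d : ℕ) (hdm : d ≤ m) (σ : Finset (Fin m ⊕ Fin m)) :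
    σ ∈ setM m d ↔ onlyB m σ ∧ ∀ i, i < m → ∃ j, hasB m σ j ∧
      ((i ≤ j ∧ j < i + d) ∨ j + m < i + d) := by
  have h := phaseA_iff m d m le_rfl σ
  rw [show (listA m).take m = listA m by apply List.take_of_length_le; simp [listA]] at h
  unfold setM
  rw [h, isInd_iff]
  constructor
  · rintro ⟨h1, h2⟩
    refine ⟨?_, ?_⟩
    · rintro (i | j) hv
      · obtain ⟨j, hj, hj'⟩ := h2 i i.2
        exact absurd hj' (h1 i j hv hj)
      · exact ⟨j, rfl⟩
    · intro i hi
      obtain ⟨j, hj, hj'⟩ := h2 ⟨i, hi⟩ hi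
      exact ⟨j, ⟨j, rfl, hj⟩, (nb_iff m d i j hdm hi j.2).1 hj'⟩
  · rintro ⟨h1, h2⟩
    refine ⟨?_, ?_⟩
    · intro i j hi
      obtain ⟨_, h⟩ := h1 _ hi
      simp at h
    · intro i _
      obtain ⟨_, ⟨j, rfl, hj⟩, hj'⟩ := h2 i i.2
      exact ⟨j, hj, (nb_iff m d i j hdm i.2 j.2).2 hj'⟩

lemma hasB_insert (m : ℕ) (σ : Finset (Fin m ⊕ Fin m)) (p : Fin m) (n : ℕ) :
    hasB m (insert (Sum.inr p) σ) n ↔ n = p.val ∨ hasB m σ n := by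
  unfold hasB
  constructor
  · rintro ⟨j, rfl, hj⟩
    simp at hj
    rcases hj with rfl | hj
    · exact Or.inl rfl
    · exact Or.inr ⟨j, rfl, hj⟩
  · rintro (rfl | ⟨j, rfl, hj⟩)
    · exact ⟨p, rfl, by simp⟩
    · exact ⟨j, rfl, by simp [hj]⟩

lemma hasB_erase (m : ℕ) (σ : Finset (Fin m ⊕ Fin m)) (p : Fin m) (n : ℕ) :
    hasB m (σ.erase (Sum.inr p)) n ↔ n ≠ p.val ∧ hasB m σ n := by
  unfold hasB
  constructor
  · rintro ⟨j, rfl, hj⟩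
    simp at hj
    exact ⟨fun h => hj.1 (Fin.ext h), j, rfl, hj.2⟩
  · rintro ⟨hne, j, rfl, hj⟩
    refine ⟨j, rfl, ?_⟩
    simp only [Finset.mem_erase, ne_eq, Sum.inr.injEq]
    exact ⟨fun h => hne (by rw [h]), hj⟩

lemma hasB_val (m : ℕ) (σ : Finset (Fin m ⊕ Fin m)) (p : Fin m) :
    hasB m σ p.val ↔ Sum.inr p ∈ σ := by
  constructor
  · rintro ⟨j, hj, h⟩
    rwa [← Fin.ext hj]
  · intro h; exact ⟨p, rfl, h⟩

lemma setM_insert (m d : ℕ) (hdm : d ≤ m) (σ : Finset (Fin m ⊕ Fin m)) (p : Fin m)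
    (h : σ ∈ setM m d) : insert (Sum.inr p) σ ∈ setM m d := by
  rw [mem_setM_iff m d hdm] at h ⊢
  refine ⟨?_, ?_⟩
  · intro v hv
    rcases Finset.mem_insert.1 hv with rfl | hv
    · exact ⟨p, rfl⟩
    · exact h.1 v hv
  · intro i hi
    obtain ⟨j, hj, hj'⟩ := h.2 i hi
    exact ⟨j, (hasB_insert ..).2 (Or.inr hj), hj'⟩

/-- The canonical positions `0, j1, d+1, d+1+j1, …`. -/
def canon (d j1 n : ℕ) : Prop := ∃ r, n = r * (d + 1) ∨ n = j1 + r * (d + 1)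

lemma canon_near (d j1 r n : ℕ) (h1 : 1 ≤ j1) (h2 : j1 ≤ d)
    (h : canon d j1 n) (hl : r * (d + 1) ≤ n) (hu : n ≤ (r + 1) * (d + 1)) :
    n = r * (d + 1) ∨ n = j1 + r * (d + 1) ∨ n = (r + 1) * (d + 1) := by
  obtain ⟨s, hs⟩ := h
  rcases lt_trichotomy s r with hsr | rfl | hsr
  · have : (s + 1) * (d + 1) ≤ r * (d + 1) := Nat.mul_le_mul_right _ hsr
    rw [Nat.add_mul] at *
    omega
  · tauto
  · have : (r + 1) * (d + 1) ≤ s * (d + 1) := Nat.mul_le_mul_right _ hsr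
    omega

lemma canon_succ (d j1 p : ℕ) (h1 : 1 ≤ j1) (h2 : j1 ≤ d) (hp : canon d j1 p) :
    ∃ p', p < p' ∧ p' ≤ p + d ∧ canon d j1 p' ∧ (∀ x, p < x → x < p' → ¬ canon d j1 x) ∧
      ((p = 0 ∧ p' = j1) ∨
       ∃ p0, p0 < p ∧ p0 + (d + 1) = p' ∧ canon d j1 p0 ∧
        ∀ x, p0 < x → x < p → ¬ canon d j1 x) := by
  obtain ⟨r, rfl | rfl⟩ := hp
  · refine ⟨j1 + r * (d + 1), by omega, by omega, ⟨r, Or.inr rfl⟩, ?_, ?_⟩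
    · intro x hx hx' hc
      have e : (r + 1) * (d + 1) = r * (d + 1) + (d + 1) := by ring
      have := canon_near d j1 r x h1 h2 hc (by omega) (by omega)
      omega
    · rcases r with _ | r
      · left; simp
      · right
        have e : (r + 1) * (d + 1) = r * (d + 1) + (d + 1) := by ring
        refine ⟨j1 + r * (d + 1), by omega, by omega, ⟨r, Or.inr rfl⟩, ?_⟩
        intro x hx hx' hc
        have := canon_near d j1 r x h1 h2 hc (by omega) (by omega)
        omega
  · have e : (r + 1) * (d + 1) = r * (d + 1) + (d + 1) := by ring
    refine ⟨(r + 1) * (d + 1), by omega, by omega, ⟨r + 1, Or.inl rfl⟩, ?_, Or.inr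
      ⟨r * (d + 1), by omega, by omega, ⟨r, Or.inl rfl⟩, ?_⟩⟩
    all_goals
      intro x hx hx' hc
      have := canon_near d j1 r x h1 h2 hc (by omega) (by omega)
      omega

/-- `σ` is canonical below the first canonical position that is `≥ p`. -/
def goodPre (m d j1 p : ℕ) (σ : Finset (Fin m ⊕ Fin m)) : Prop :=
  ∀ x, (∀ c, canon d j1 c → p ≤ c → x < c) → (hasB m σ x ↔ canon d j1 x)

/-- The largest subscript of `σ` is `k`. -/
def maxK (m k : ℕ) (σ : Finset (Fin m ⊕ Fin m)) : Prop :=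
  hasB m σ k ∧ ∀ x, hasB m σ x → x ≤ k

lemma goodPre_of_canon (m d j1 p : ℕ) (σ : Finset (Fin m ⊕ Fin m)) (hp : canon d j1 p) :
    goodPre m d j1 p σ ↔ ∀ x, x < p → (hasB m σ x ↔ canon d j1 x) := by
  constructor
  · intro h x hx
    exact h x (fun c _ hc => by omega)
  · intro h x hx
    exact h x (hx p hp le_rfl)

lemma goodPre_succ_of_canon (m d j1 p p' : ℕ) (σ : Finset (Fin m ⊕ Fin m)) (hpp : p < p')
    (hp' : canon d j1 p') (hn : ∀ x, p < x → x < p' → ¬ canon d j1 x) :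
    goodPre m d j1 (p + 1) σ ↔ ∀ x, x < p' → (hasB m σ x ↔ canon d j1 x) := by
  constructor
  · intro h x hx
    refine h x (fun c hc hpc => ?_)
    by_contra hcon
    exact hn c (by omega) (by omega) hc
  · intro h x hx
    exact h x (hx p' hp' (by omega))

lemma goodPre_succ_of_not_canon (m d j1 p : ℕ) (σ : Finset (Fin m ⊕ Fin m))
    (hp : ¬ canon d j1 p) : goodPre m d j1 (p + 1) σ ↔ goodPre m d j1 p σ := by
  have : ∀ c, canon d j1 c → (p + 1 ≤ c ↔ p ≤ c) := by
    intro c hc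
    have : c ≠ p := by rintro rfl; exact hp hc
    omega
  constructor
  · intro h x hx
    exact h x (fun c hc hpc => hx c hc (by have := this c hc; omega))
  · intro h x hx
    exact h x (fun c hc hpc => hx c hc (by have := this c hc; omega))

/-- Removal of a canonical `p` leaves `M` iff there is nothing up to the next canonical position. -/
lemma erase_iff (m d j1 p' : ℕ) (hdm : d + 1 ≤ m) (h1 : 1 ≤ j1) (h2 : j1 ≤ d)
    (σ : Finset (Fin m ⊕ Fin m)) (hM : σ ∈ setM m d) (hk : maxK m (m + j1 - (d + 1)) σ)
    (p : Fin m) (hpp : p.val < p') (hp'k : p' ≤ m + j1 - (d + 1))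
    (hpre : ∀ x, x < p.val → (hasB m σ x ↔ canon d j1 x))
    (hcase : (p.val = 0 ∧ p' = j1) ∨
       ∃ p0, p0 < p.val ∧ p0 + (d + 1) = p' ∧ canon d j1 p0 ∧
        ∀ x, p0 < x → x < p.val → ¬ canon d j1 x) :
    σ.erase (Sum.inr p) ∉ setM m d ↔ ∀ x, p.val < x → x < p' → ¬ hasB m σ x := by
  rw [mem_setM_iff m d (by omega)] at hM ⊢
  have hpm := p.2
  constructor
  · intro h y hy hy' hyB
    apply h
    refine ⟨fun v hv => hM.1 v (Finset.mem_of_mem_erase hv), fun i hi => ?_⟩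
    obtain ⟨j, hj, hj'⟩ := hM.2 i hi
    by_cases hjp : j = p.val
    · subst hjp
      by_contra hcon
      push Not at hcon
      have hyy := hcon y ((hasB_erase ..).2 ⟨by omega, hyB⟩)
      rcases hcase with ⟨hp0, hpj⟩ | ⟨p0, hp0, hp0', hc, _⟩
      · have := hcon _ ((hasB_erase m σ p _).2 ⟨by omega, hk.1⟩)
        omega
      · have := hcon p0 ((hasB_erase ..).2 ⟨by omega, (hpre p0 hp0).2 hc⟩)
        omega
    · exact ⟨j, (hasB_erase ..).2 ⟨hjp, hj⟩, hj'⟩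
  · intro h hM'
    have hlow : ∀ j, hasB m (σ.erase (Sum.inr p)) j → j < p' → j < p.val ∧ canon d j1 j := by
      intro j hj hjp
      rw [hasB_erase] at hj
      by_cases hlt : j < p.val
      · exact ⟨hlt, (hpre j hlt).1 hj.2⟩
      · exact absurd hj.2 (h j (by omega) hjp)
    have hhigh : ∀ j, hasB m (σ.erase (Sum.inr p)) j → j ≤ m + j1 - (d + 1) := by
      intro j hj
      rw [hasB_erase] at hj
      exact hk.2 j hj.2
    rcases hcase with ⟨hp0, hpj⟩ | ⟨p0, hp0, hp0', hc, hn⟩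
    · by_cases hjd : j1 = d
      · obtain ⟨j, hj, hj'⟩ := hM'.2 0 (by omega)
        have := hlow j hj
        omega
      · obtain ⟨j, hj, hj'⟩ := hM'.2 (m + j1 - (d + 1) + 1) (by omega)
        have := hlow j hj
        have := hhigh j hj
        omega
    · obtain ⟨j, hj, hj'⟩ := hM'.2 (p0 + 1) (by omega)
      have hjj : p0 < j ∧ j < p' := by omega
      have := hlow j hj hjj.2
      exact hn j hjj.1 this.1 this.2

lemma phaseB_iff (m d j1 I : ℕ) (hdm : d + 1 ≤ m) (h1 : 1 ≤ j1) (h2 : j1 ≤ d)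
    (hI : canon d j1 (I + j1)) (hIk : I + j1 ≤ m + j1 - (d + 1)) :
    ∀ n, n ≤ I + 1 → ∀ σ : Finset (Fin m ⊕ Fin m), maxK m (m + j1 - (d + 1)) σ →
    (σ ∈ phase (setM m d) ((listB m).take n) ↔ σ ∈ setM m d ∧ goodPre m d j1 n σ) := by
  intro n
  induction n with
  | zero =>
    intro _ σ hk
    have h0 : canon d j1 0 := ⟨0, by simp⟩
    rw [goodPre_of_canon _ _ _ _ _ h0]
    simp [phase]
  | succ n ih =>
    intro hn σ hk
    have ih := ih (by omega)
    have hnm : n < m := by omega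
    have hlen : n < (listB m).length := by simp [listB]; omega
    have hget : (listB m)[n] = Sum.inr (⟨n, hnm⟩ : Fin m) := by simp [listB]
    have hnk : n < m + j1 - (d + 1) := by omega
    set p : Fin m := ⟨n, hnm⟩ with hp
    have hpv : p.val = n := rfl
    have hki : maxK m (m + j1 - (d + 1)) (insert (Sum.inr p) σ) := by
      refine ⟨(hasB_insert ..).2 (Or.inr hk.1), fun x hx => ?_⟩
      rcases (hasB_insert ..).1 hx with h | h
      · omega
      · exact hk.2 x h
    have hke : maxK m (m + j1 - (d + 1)) (σ.erase (Sum.inr p)) :=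
      ⟨(hasB_erase ..).2 ⟨by omega, hk.1⟩, fun x hx => hk.2 x ((hasB_erase ..).1 hx).2⟩
    rw [phase_succ _ _ _ hlen, mem_stepSurv, hget, ih σ hk, ih _ hki, ih _ hke, ← hasB_val, hpv]
    by_cases hc : canon d j1 n
    · obtain ⟨p', hpp, hpd, hc', hno, hcase⟩ := canon_succ d j1 n h1 h2 hc
      have hp'k : p' ≤ m + j1 - (d + 1) := by
        by_contra hcon
        exact hno (I + j1) (by omega) (by omega) hI
      rw [goodPre_succ_of_canon m d j1 n p' σ hpp hc' hno]
      simp only [goodPre_of_canon m d j1 n _ hc]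
      constructor
      · rintro ⟨⟨hM, hg⟩, h3, h4⟩
        have hin : hasB m σ n := by
          by_contra hcon
          refine h3 ⟨hcon, setM_insert m d (by omega) σ p hM, fun x hx => ?_⟩
          rw [hasB_insert, ← hg x hx]
          constructor
          · rintro (h | h)
            · omega
            · exact h
          · exact Or.inr
        have hout : σ.erase (Sum.inr p) ∉ setM m d := by
          intro hcon
          refine h4 ⟨hin, hcon, fun x hx => ?_⟩
          rw [hasB_erase, ← hg x hx]
          exact ⟨fun h => h.2, fun h => ⟨by omega, h⟩⟩
        rw [erase_iff m d j1 p' hdm h1 h2 σ hM hk p hpp hp'k hg hcase] at hout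
        refine ⟨hM, fun x hx => ?_⟩
        rcases lt_trichotomy x n with hxn | rfl | hxn
        · exact hg x hxn
        · exact ⟨fun _ => hc, fun _ => hin⟩
        · exact ⟨fun h => absurd h (hout x hxn hx), fun h => absurd h (hno x hxn hx)⟩
      · rintro ⟨hM, hg⟩
        refine ⟨⟨hM, fun x hx => hg x (by omega)⟩, fun h => h.1 ((hg n hpp).2 hc), ?_⟩
        rintro ⟨_, he, _⟩
        revert he
        rw [imp_false, erase_iff m d j1 p' hdm h1 h2 σ hM hk p hpp hp'k
          (fun x hx => hg x (by omega)) hcase]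
        intro x hx hx' hB
        exact hno x hx hx' ((hg x hx').1 hB)
    · rw [goodPre_succ_of_not_canon m d j1 n σ hc]
      have key : ∀ τ : Finset (Fin m ⊕ Fin m), goodPre m d j1 n τ → ¬ hasB m τ n := by
        intro τ h hB
        refine hc ((h n fun c hcc hnc => ?_).1 hB)
        have : c ≠ n := by rintro rfl; exact hc hcc
        omega
      constructor
      · exact fun h => h.1
      · intro h
        refine ⟨h, fun h' => key _ h'.2.2 ((hasB_insert ..).2 (Or.inl rfl)),
          fun h' => key _ h.2 h'.1⟩

lemma scriptSb_iff (m d n : ℕ) (hn : n ≤ m) (σ : Finset (Fin m ⊕ Fin m)) :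
    σ ∈ phase (setM m d) ((listB m).take n) ↔
      σ ∈ setM m d ∧ ∀ i : Fin m, i.val < n → σ ∉ scriptSb m d i := by
  induction n with
  | zero => simp [phase]
  | succ n ih =>
    have hlen : n < (listB m).length := by simp [listB]; omega
    have hget : (listB m)[n] = Sum.inr (⟨n, by omega⟩ : Fin m) := by simp [listB]
    rw [phase_succ _ _ _ hlen, hget]
    have e : ∀ T : Set (Finset (Fin m ⊕ Fin m)), T = phase (setM m d) ((listB m).take n) →
        stepSurv (Sum.inr ⟨n, by omega⟩) T = T \ scriptSb m d ⟨n, by omega⟩ := by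
      rintro T rfl; rfl
    rw [e _ rfl, Set.mem_sdiff, ih (by omega)]
    constructor
    · rintro ⟨⟨h1, h2⟩, h3⟩
      refine ⟨h1, fun i hi => ?_⟩
      by_cases hi' : i.val < n
      · exact h2 i hi'
      · have : (⟨n, by omega⟩ : Fin m) = i := by ext; simp; omega
        rw [← this]
        exact h3
    · rintro ⟨h1, h2⟩
      exact ⟨⟨h1, fun i hi => h2 i (by omega)⟩, h2 _ (by simp)⟩

/-- 0-based indices: write `m = t(d+1) + a` with `t ≥ 1`, `0 ≤ a ≤ d`, and let
`1 ≤ l < t`.  Let `σ ∈ M` satisfy property `P_l` (with parameter `j1`, 0-based subscripts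
`i_r = (r-1)(d+1)`, `j_r = j1 + (r-1)(d+1)`, so `i_{l+1} = l(d+1)`).  Then `σ ∉ 𝒮_{b_i}` for
all `i ≤ l(d+1)` iff: (1) `b_{i_{l+1}} ∈ σ`; (2) `σ \ {b_{i_{l+1}}} ∉ M`; and (3) no
subscript `s ≠ i_{l+1}` of `σ` satisfies `j_l < s < j_{l+1}`. -/
theorem stmt11 (m d t a l j1 : ℕ) (hd : 1 ≤ d) (hdm : d ≤ m)
    (ht : 1 ≤ t) (ha : a ≤ d) (hm : m = t * (d + 1) + a)
    (hl : 1 ≤ l) (hlt : l < t)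
    (σ : Finset (Fin m ⊕ Fin m)) (hP : propP m d l j1 σ) :
    (∀ i : Fin m, i.val ≤ l * (d + 1) → σ ∉ scriptSb m d i) ↔
      (hasB m σ (l * (d + 1)) ∧
       (∀ j : Fin m, j.val = l * (d + 1) → σ.erase (Sum.inr j) ∉ setM m d) ∧
       (∀ s : Fin m, Sum.inr s ∈ σ → s.val ≠ l * (d + 1) →
          ¬ (j1 + (l - 1) * (d + 1) < s.val ∧ s.val < j1 + l * (d + 1)))) := by
  obtain ⟨hM, hB, h1, h2, hP1, hP2, hkB, hkmax, hPe⟩ := hP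
  obtain ⟨q, rfl⟩ : ∃ q, l = q + 1 := ⟨l - 1, by omega⟩
  simp only [Nat.add_sub_cancel] at *
  have hlt' : (q + 2) * (d + 1) ≤ t * (d + 1) := Nat.mul_le_mul_right _ hlt
  have e2 : (q + 2) * (d + 1) = (q + 1) * (d + 1) + (d + 1) := by ring
  have e3 : (q + 1 + 1) * (d + 1) = (q + 1) * (d + 1) + (d + 1) := by ring
  have e1 : (q + 1) * (d + 1) = q * (d + 1) + (d + 1) := by ring
  have hk : maxK m (m + j1 - (d + 1)) σ :=
    ⟨hkB, by rintro x ⟨j, rfl, hj⟩; exact hkmax j hj⟩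
  set I := (q + 1) * (d + 1) with hI
  have hcI : canon d j1 I := ⟨q + 1, Or.inl rfl⟩
  have hcJ : canon d j1 (I + j1) := ⟨q + 1, Or.inr (by rw [hI]; ring)⟩
  have hno : ∀ x, I < x → x < I + j1 → ¬ canon d j1 x := by
    intro x hx hx' hc
    have := canon_near d j1 (q + 1) x h1 h2 hc (by omega) (by omega)
    omega
  have hno' : ∀ x, j1 + q * (d + 1) < x → x < I → ¬ canon d j1 x := by
    intro x hx hx' hc
    have := canon_near d j1 q x h1 h2 hc (by omega) (by omega)
    omega
  have hpre : ∀ x, x ≤ j1 + q * (d + 1) → (hasB m σ x ↔ canon d j1 x) := by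
    intro x hx
    constructor
    · rintro ⟨j, rfl, hj⟩
      obtain ⟨r, _, _, hr⟩ := hP2 j hj hx
      exact ⟨r - 1, hr⟩
    · rintro ⟨r, hr⟩
      have hrq : r ≤ q := by
        by_contra hcon
        have : (q + 1) * (d + 1) ≤ r * (d + 1) := Nat.mul_le_mul_right _ (by omega)
        omega
      have := hP1 (r + 1) (by omega) (by omega)
      rw [Nat.add_sub_cancel] at this
      rcases hr with rfl | rfl
      · exact this.1
      · exact this.2
  have hL : (∀ i : Fin m, i.val ≤ I → σ ∉ scriptSb m d i) ↔
      ∀ x, x < I + j1 → (hasB m σ x ↔ canon d j1 x) := by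
    rw [← goodPre_succ_of_canon m d j1 I (I + j1) σ (by omega) hcJ hno]
    have hA := phaseB_iff m d j1 I (by omega) h1 h2 hcJ (by omega) (I + 1) le_rfl σ hk
    have hC := scriptSb_iff m d (I + 1) (by omega) σ
    rw [hC] at hA
    simp only [hM, true_and, Nat.lt_succ_iff] at hA
    exact hA
  rw [hL]
  constructor
  · intro h
    refine ⟨(h I (by omega)).2 hcI, ?_, ?_⟩
    · intro j hj
      rw [erase_iff m d j1 (I + j1) (by omega) h1 h2 σ hM hk j (by omega) (by omega)
        (fun x hx => h x (by omega))
        (Or.inr ⟨j1 + q * (d + 1), by omega, by omega, ⟨q, Or.inr rfl⟩,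
          fun x hx hx' => hno' x hx (by omega)⟩)]
      intro x hx hx' hxB
      exact hno x (by omega) hx' ((h x hx').1 hxB)
    · rintro s hs hne ⟨hs1, hs2⟩
      have hc := (h s.val (by omega)).1 ⟨s, rfl, hs⟩
      by_cases hsI : s.val < I
      · exact hno' _ hs1 hsI hc
      · exact hno _ (by omega) (by omega) hc
  · rintro ⟨hI1, -, hI3⟩ x hx
    by_cases hx1 : x ≤ j1 + q * (d + 1)
    · exact hpre x hx1
    by_cases hx2 : x = I
    · subst hx2; exact ⟨fun _ => hcI, fun _ => hI1⟩
    constructor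
    · rintro ⟨s, rfl, hs⟩
      exact absurd ⟨by omega, by omega⟩ (hI3 s hs hx2)
    · intro hc
      by_cases hsI : x < I
      · exact absurd hc (hno' _ (by omega) hsI)
      · exact absurd hc (hno _ (by omega) (by omega))
end

section
/- Write m = t(d+1) + α with t ≥ 1 and 0 ≤ α ≤ d. Let σ = {b_{1}, b_{j_2}, …, b_k} ⊆ B (subscripts 1 < j_2 < … < k ≤ m) be a simplex in M, and let l ∈ {1,…,t}. Then σ ∉ 𝒮_{b_i} for all i ∈ {1,…,l(d+1)} if and only if σ satisfies property P_l. -/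
open Finset

namespace Aux

/-- every cyclic window of length `d` meets `p` -/
def W (m d : ℕ) (p : Set ℕ) : Prop :=
  ∀ s, s < m → ∃ x, x ∈ p ∧ x < m ∧ ((s ≤ x ∧ x < s + d) ∨ x + m < s + d)

def Pat (d j1 x : ℕ) : Prop := ∃ r, x = r * (d + 1) ∨ x = r * (d + 1) + j1

def L (m d n j1 : ℕ) (p : Set ℕ) : Prop :=
  (∀ x, x < n → (x ∈ p ↔ Pat d j1 x)) ∧
  (∀ x ∈ p, n ≤ x → ∃ y, n ≤ y ∧ y ≤ x ∧ Pat d j1 y) ∧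
  (m + j1 - (d + 1)) ∈ p ∧ (∀ x ∈ p, x ≤ m + j1 - (d + 1))

def I (m d n : ℕ) (p : Set ℕ) : Prop :=
  0 ∈ p ∧ (∀ x ∈ p, 1 ≤ x → n ≤ x) ∧ (∃ x ∈ p, m + n ≤ x + d + 1) ∧ ¬ W m d (p \ {0})

def C (m d n : ℕ) (p : Set ℕ) : Prop :=
  W m d p ∧ (I m d n p ∨ ∃ j1, 1 ≤ j1 ∧ j1 ≤ d ∧ j1 < n ∧ L m d n j1 p)

theorem W_mono {m d : ℕ} {p q : Set ℕ} (h : W m d p) (hpq : p ⊆ q) : W m d q := by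
  intro s hs
  obtain ⟨x, hx, h'⟩ := h s hs
  exact ⟨x, hpq hx, h'⟩

theorem mul_step {q r r' : ℕ} (h : r < r') : r * q + q ≤ r' * q := by
  have := Nat.mul_le_mul_right q (Nat.succ_le_of_lt h)
  rw [Nat.succ_mul] at this
  exact this

theorem pat_zero (d j1 : ℕ) : Pat d j1 0 := ⟨0, Or.inl (by simp)⟩
theorem pat_j (d j1 : ℕ) : Pat d j1 j1 := ⟨0, Or.inr (by simp)⟩

theorem pat_between {d j1 r y : ℕ} (h1 : 1 ≤ j1) (h2 : j1 ≤ d) (hy : Pat d j1 y)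
    (hl : r * (d + 1) ≤ y) (hu : y < r * (d + 1) + (d + 1)) :
    y = r * (d + 1) ∨ y = r * (d + 1) + j1 := by
  obtain ⟨r', hr'⟩ := hy
  rcases lt_trichotomy r r' with h | h | h
  · have := mul_step (q := d + 1) h
    omega
  · subst h; exact hr'
  · have := mul_step (q := d + 1) h
    omega

theorem pat_small {d j1 y : ℕ} (h1 : 1 ≤ j1) (h2 : j1 ≤ d) (hy : Pat d j1 y) (h : y < d + 1) :
    y = 0 ∨ y = j1 := by
  have := pat_between (r := 0) h1 h2 hy (by simp) (by simpa using h)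
  simpa using this

/-- predecessor and successor in the pattern -/
theorem pat_nbrs {d j1 n t : ℕ} (h1 : 1 ≤ j1) (h2 : j1 ≤ d) (hn : Pat d j1 n) (hn1 : 1 ≤ n)
    (hnt : n < t * (d + 1)) :
    ∃ p, Pat d j1 p ∧ p < n ∧ n ≤ p + d ∧ Pat d j1 (p + d + 1) ∧ p + d + 1 ≤ t * (d + 1) ∧
      (∀ y, Pat d j1 y → p < y → y < p + d + 1 → y = n) := by
  obtain ⟨r, hr⟩ := hn
  have hrt : r < t := by
    by_contra hc
    have := Nat.mul_le_mul_right (d + 1) (not_lt.mp hc)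
    omega
  have hrt' := mul_step (q := d + 1) hrt
  rcases hr with hr | hr
  · obtain ⟨s, rfl⟩ : ∃ s, r = s + 1 := by
      cases r with
      | zero => simp at hr; omega
      | succ s => exact ⟨s, rfl⟩
    have e : (s + 1) * (d + 1) = s * (d + 1) + (d + 1) := by ring
    refine ⟨s * (d + 1) + j1, ⟨s, Or.inr rfl⟩, by omega, by omega, ⟨s + 1, Or.inr (by omega)⟩,
      by omega, ?_⟩
    intro y hy ha hb
    by_cases hc : y < s * (d + 1) + (d + 1)
    · have := pat_between (r := s) h1 h2 hy (by omega) hc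
      omega
    · have := pat_between (r := s + 1) h1 h2 hy (by omega) (by omega)
      omega
  · refine ⟨r * (d + 1), ⟨r, Or.inl rfl⟩, by omega, by omega,
      ⟨r + 1, Or.inl (by ring)⟩, by omega, ?_⟩
    intro y hy ha hb
    have := pat_between (r := r) h1 h2 hy (by omega) (by omega)
    omega

theorem pat_le {m d j1 n t : ℕ} (hm : t * (d + 1) ≤ m) (h2 : j1 ≤ d) (hn : Pat d j1 n)
    (hnt : n < t * (d + 1)) : n + (d + 1) ≤ m + j1 := by
  obtain ⟨r, hr⟩ := hn
  have hrt : r < t := by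
    by_contra hc
    have := Nat.mul_le_mul_right (d + 1) (not_lt.mp hc)
    omega
  have hrt' := mul_step (q := d + 1) hrt
  omega

theorem notW {m d : ℕ} {p : Set ℕ} (h : ¬ W m d p) :
    ∃ s, s < m ∧ ∀ x ∈ p, x < m → ¬ (s ≤ x ∧ x < s + d) ∧ ¬ (x + m < s + d) := by
  unfold W at h
  push Not at h
  obtain ⟨s, hs, h⟩ := h
  refine ⟨s, hs, fun x hx hxm => ?_⟩
  have := h x hx hxm
  omega

theorem L_mono {m d n n' j1 : ℕ} {p : Set ℕ} (hn : n ≤ n') (h : L m d n' j1 p) :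
    L m d n j1 p := by
  obtain ⟨a, b, c, e⟩ := h
  refine ⟨fun x hx => a x (by omega), fun x hx hnx => ?_, c, e⟩
  by_cases hc : x < n'
  · exact ⟨x, hnx, le_rfl, (a x hc).1 hx⟩
  · obtain ⟨y, h1, h2, h3⟩ := b x hx (by omega)
    exact ⟨y, by omega, h2, h3⟩

theorem L_step {m d t n j1 : ℕ} {p : Set ℕ} (hm : t * (d + 1) ≤ m)
    (h1 : 1 ≤ j1) (h2 : j1 ≤ d) (hn1 : 1 ≤ n) (hnt : n < t * (d + 1))
    (hW : W m d p) (hL : L m d n j1 p) (hn : Pat d j1 n) (hnp : n ∈ p) :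
    ¬ W m d (p \ {n}) ↔ L m d (n + 1) j1 p := by
  obtain ⟨a, b, c, e⟩ := hL
  obtain ⟨q, hq, hqn, hnq, hq', hqt, huniq⟩ := pat_nbrs h1 h2 hn hn1 hnt
  have h0 : 0 ∈ p := (a 0 (by omega)).2 (pat_zero _ _)
  have hqp : q ∈ p := (a q hqn).2 hq
  constructor
  · intro h
    obtain ⟨s, hs, h⟩ := notW h
    obtain ⟨z, hz, hzm, hzw⟩ := hW s hs
    have hzn : z = n := by
      by_contra hne
      have := h z ⟨hz, hne⟩ hzm
      omega
    subst hzn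
    have h00 := h 0 ⟨h0, by simp; omega⟩ (by omega)
    have hqq := h q ⟨hqp, by simp; omega⟩ (by omega)
    refine ⟨fun x hx => ?_, fun x hx hxn => ?_, c, e⟩
    · by_cases hxz : x = z
      · subst hxz; simp [hnp, hn]
      · exact a x (by omega)
    · refine ⟨q + d + 1, by omega, ?_, hq'⟩
      by_contra hc
      have := h x ⟨hx, by simp; omega⟩ (by omega)
      omega
  · rintro ⟨a', b', -, -⟩ h
    obtain ⟨x, ⟨hx, hxn⟩, hxm, hxw⟩ := h (q + 1) (by omega)
    simp only [Set.mem_singleton_iff] at hxn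
    have hxw' : q + 1 ≤ x ∧ x < q + 1 + d := by omega
    by_cases hc : x < n
    · exact hxn (huniq x ((a x hc).1 hx) (by omega) (by omega))
    · obtain ⟨y, hy1, hy2, hy3⟩ := b' x hx (by omega)
      have := huniq y hy3 (by omega) (by omega)
      omega

theorem I_late {m d n : ℕ} {p : Set ℕ} (hp : ∀ x ∈ p, x < m) (hn : d + 1 ≤ n) : ¬ I m d n p := by
  rintro ⟨-, -, ⟨x, hx, h⟩, -⟩
  have := hp x hx
  omega

theorem L_unique {m d n j1 j2 : ℕ} {p p' : Set ℕ} (h1 : 1 ≤ j1) (h2 : j1 ≤ d) (h1' : 1 ≤ j2)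
    (h2' : j2 ≤ d) (hn : j2 < n) (hL : L m d n j1 p) (hL' : L m d n j2 p')
    (hpp : ∀ x, x < n → (x ∈ p ↔ x ∈ p')) : j2 = j1 := by
  have : j2 ∈ p := (hpp j2 hn).2 ((hL'.1 j2 hn).2 (pat_j _ _))
  have := pat_small h1 h2 ((hL.1 j2 hn).1 this) (by omega)
  omega

theorem I_insert {m d n : ℕ} {p : Set ℕ} (hdm : d + 1 ≤ m) (hp : ∀ x ∈ p, x < m)
    (hWp : W m d p)
    (hn1 : 1 ≤ n) (hnd : n ≤ d) (hI : I m d n p) :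
    I m d n (insert n p) ↔ ∀ x ∈ p, x + d + 1 ≤ m + n := by
  obtain ⟨h0, hlow, ⟨x0, hx0, hx0'⟩, hW⟩ := hI
  constructor
  · rintro ⟨-, -, -, h⟩ x hx
    obtain ⟨s, hs, h⟩ := notW h
    have hn := h n ⟨by simp, by simp; omega⟩ (by omega)
    obtain ⟨z, hz, hzm, hzw⟩ := hWp s hs
    have hz0 : z = 0 := by
      by_contra hne
      have := h z ⟨by simp [hz], hne⟩ hzm
      omega
    subst hz0
    have := hp x hx
    by_cases hx00 : x = 0
    · omega
    have hx1 := h x ⟨by simp [hx], hx00⟩ (hp x hx)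
    omega
  · intro h
    refine ⟨by simp [h0], ?_, ⟨x0, by simp [hx0], hx0'⟩, ?_⟩
    · intro x hx h1
      rcases hx with rfl | hx
      · exact le_rfl
      · exact hlow x hx h1
    · intro hc
      by_cases hnd' : n = d
      · obtain ⟨x, ⟨hx, hxn⟩, hxm, hxw⟩ := hc 0 (by omega)
        simp only [Set.mem_singleton_iff] at hxn
        rcases hx with rfl | hx
        · omega
        · have := hlow x hx (by omega)
          omega
      · obtain ⟨x, ⟨hx, hxn⟩, hxm, hxw⟩ := hc (m + n - d) (by omega)
        simp only [Set.mem_singleton_iff] at hxn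
        rcases hx with rfl | hx
        · omega
        · have := hlow x hx (by omega)
          have := h x hx
          omega

theorem I_remove {m d n : ℕ} {p : Set ℕ} (hdm : d + 1 ≤ m) (hp : ∀ x ∈ p, x < m)
    (hn1 : 1 ≤ n) (hnd : n ≤ d) (hWp : W m d p) (hnp : n ∈ p) :
    (I m d n p ∧ ¬ W m d (p \ {n})) ↔ L m d (n + 1) n p := by
  constructor
  · rintro ⟨⟨h0, hlow, ⟨x0, hx0, hx0'⟩, hW⟩, hWn⟩
    have hmax : ∀ x ∈ p, x + d + 1 ≤ m + n := by
      have := I_insert hdm hp hWp hn1 hnd ⟨h0, hlow, ⟨x0, hx0, hx0'⟩, hW⟩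
      rw [Set.insert_eq_of_mem hnp] at this
      exact this.1 ⟨h0, hlow, ⟨x0, hx0, hx0'⟩, hW⟩
    obtain ⟨s, hs, h⟩ := notW hWn
    have h00 := h 0 ⟨h0, by simp; omega⟩ (by omega)
    obtain ⟨z, hz, hzm, hzw⟩ := hWp s hs
    have hzn : z = n := by
      by_contra hne
      have := h z ⟨hz, hne⟩ hzm
      omega
    subst hzn
    have hgap : ∀ x ∈ p, z < x → d + 1 ≤ x := by
      intro x hx hzx
      by_contra hc
      have := h x ⟨hx, by simp; omega⟩ (hp x hx)
      omega
    refine ⟨?_, ?_, ?_, ?_⟩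
    · intro x hx
      constructor
      · intro hxp
        by_cases hx0 : x = 0
        · subst hx0; exact pat_zero _ _
        · have := hlow x hxp (by omega)
          have : x = z := by omega
          subst this
          exact pat_j _ _
      · intro hx'
        rcases pat_small hn1 hnd hx' (by omega) with rfl | rfl
        · exact h0
        · exact hnp
    · intro x hx hzx
      exact ⟨d + 1, by omega, hgap x hx (by omega), ⟨1, Or.inl (by simp)⟩⟩
    · have := hmax x0 hx0
      have e : m + z - (d + 1) = x0 := by omega
      rw [e]; exact hx0
    · intro x hx
      have := hmax x hx
      omega
  · rintro ⟨a, b, c, e⟩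
    have h0 : 0 ∈ p := (a 0 (by omega)).2 (pat_zero _ _)
    have hlow : ∀ x ∈ p, 1 ≤ x → n ≤ x := by
      intro x hx h1
      by_contra hc
      have := pat_small hn1 hnd ((a x (by omega)).1 hx) (by omega)
      omega
    have hgap : ∀ x ∈ p, n < x → d + 1 ≤ x := by
      intro x hx h1
      obtain ⟨y, hy1, hy2, hy3⟩ := b x hx (by omega)
      by_contra hc
      have := pat_small hn1 hnd hy3 (by omega)
      omega
    refine ⟨⟨h0, hlow, ⟨_, c, by omega⟩, ?_⟩, ?_⟩
    · intro hc
      by_cases hnd' : n = d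
      · obtain ⟨x, ⟨hx, hxn⟩, hxm, hxw⟩ := hc 0 (by omega)
        simp only [Set.mem_singleton_iff] at hxn
        have := hlow x hx (by omega)
        omega
      · obtain ⟨x, ⟨hx, hxn⟩, hxm, hxw⟩ := hc (m + n - d) (by omega)
        simp only [Set.mem_singleton_iff] at hxn
        have := hlow x hx (by omega)
        have := e x hx
        omega
    · intro hc
      obtain ⟨x, ⟨hx, hxn⟩, hxm, hxw⟩ := hc 1 (by omega)
      simp only [Set.mem_singleton_iff] at hxn
      by_cases hx0 : x = 0
      · omega
      have := hlow x hx (by omega)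
      have := hgap x hx (by omega)
      omega

/-- the case of `L` in the step -/
theorem C_step_L {m d t n j1 : ℕ} {p : Set ℕ} (hm : t * (d + 1) ≤ m)
    (hp : ∀ x ∈ p, x < m) (h1 : 1 ≤ j1) (h2 : j1 ≤ d) (hj : j1 < n) (hnt : n < t * (d + 1))
    (hW : W m d p) (hL : L m d n j1 p) :
    ((n ∉ p → ¬ C m d n (insert n p)) ∧ (n ∈ p → ¬ C m d n (p \ {n}))) ↔
      L m d (n + 1) j1 p := by
  have key : ∀ p' : Set ℕ, (∀ x, x < n → (x ∈ p ↔ x ∈ p')) → C m d n p' → L m d n j1 p' := by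
    rintro p' hpp ⟨-, hI | ⟨j2, h1', h2', hj', hL'⟩⟩
    · have : j1 ∈ p' := (hpp j1 hj).1 ((hL.1 j1 hj).2 (pat_j _ _))
      have := hI.2.1 j1 this h1
      omega
    · have := L_unique h1 h2 h1' h2' hj' hL hL' hpp
      subst this
      exact hL'
  by_cases hpat : Pat d j1 n
  · by_cases hnp : n ∈ p
    · have hs := L_step hm h1 h2 (by omega) hnt hW hL hpat hnp
      rw [← hs]
      simp only [hnp, not_true_eq_false, false_imp_iff, true_and, true_imp_iff]
      rw [not_iff_not]
      constructor
      · exact fun h => h.1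
      · intro hWn
        refine ⟨hWn, Or.inr ⟨j1, h1, h2, hj, ?_⟩⟩
        obtain ⟨a, b, c, e⟩ := hL
        refine ⟨?_, ?_, ?_, ?_⟩
        · intro x hx
          rw [← a x hx]
          simp; omega
        · intro x hx
          exact b x hx.1
        · refine ⟨c, ?_⟩
          simp only [Set.mem_singleton_iff]
          intro hc
          refine hs.2 ⟨?_, ?_, c, e⟩ hWn
          · intro x hx
            by_cases hxn : x = n
            · subst hxn; simp [hnp, hpat]
            · exact a x (by omega)
          · intro x hx hnx
            have := e x hx
            omega
        · intro x hx
          exact e x hx.1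
    · constructor
      · rintro ⟨h, -⟩
        exfalso
        refine h hnp ⟨W_mono hW (Set.subset_insert _ _), Or.inr ⟨j1, h1, h2, hj, ?_⟩⟩
        obtain ⟨a, b, c, e⟩ := hL
        refine ⟨?_, ?_, ?_, ?_⟩
        · intro x hx
          rw [← a x hx]
          simp; omega
        · intro x hx hnx
          exact ⟨n, le_rfl, hnx, hpat⟩
        · exact Set.mem_insert_of_mem _ c
        · have := pat_le hm h2 hpat hnt
          rintro x (rfl | hx)
          · omega
          · exact e x hx
      · rintro ⟨a, -⟩
        exact absurd ((a n (by omega)).2 hpat) hnp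
  · have hnp : n ∉ p := by
      intro hc
      obtain ⟨y, hy1, hy2, hy3⟩ := hL.2.1 n hc le_rfl
      have : y = n := by omega
      subst this
      exact hpat hy3
    simp only [hnp, not_false_eq_true, true_imp_iff, false_imp_iff, and_true]
    constructor
    · intro _
      obtain ⟨a, b, c, e⟩ := hL
      refine ⟨?_, ?_, c, e⟩
      · intro x hx
        by_cases hxn : x = n
        · subst hxn; simp [hnp, hpat]
        · exact a x (by omega)
      · intro x hx hnx
        obtain ⟨y, hy1, hy2, hy3⟩ := b x hx (by omega)
        refine ⟨y, ?_, hy2, hy3⟩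
        have : y ≠ n := by rintro rfl; exact hpat hy3
        omega
    · intro _ hC
      have hL' := key _ (by intro x hx; simp; omega) hC
      obtain ⟨y, hy1, hy2, hy3⟩ := hL'.2.1 n (by simp) le_rfl
      have : y = n := by omega
      subst this
      exact hpat hy3

theorem C_step {m d t n : ℕ} {p : Set ℕ} (hm : t * (d + 1) ≤ m) (hdm : d + 1 ≤ m)
    (hp : ∀ x ∈ p, x < m) (hn1 : 1 ≤ n) (hnt : n < t * (d + 1)) :
    C m d (n + 1) p ↔
      C m d n p ∧ (n ∉ p → ¬ C m d n (insert n p)) ∧ (n ∈ p → ¬ C m d n (p \ {n})) := by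
  constructor
  · rintro ⟨hW, hI | ⟨j1, h1, h2, hj, hL⟩⟩
    · -- early case
      have hnd : n ≤ d := by
        by_contra hc
        exact I_late hp (by omega) hI
      obtain ⟨h0, hlow, ⟨x0, hx0, hx0'⟩, hW0⟩ := hI
      have hI : I m d n p :=
        ⟨h0, fun x hx h1 => by have := hlow x hx h1; omega, ⟨x0, hx0, by omega⟩, hW0⟩
      have hnp : n ∉ p := fun h => by have := hlow n h hn1; omega
      refine ⟨⟨hW, Or.inl hI⟩, ?_, fun h => absurd h hnp⟩
      rintro - ⟨-, hI' | ⟨j2, h1', h2', hj', hL'⟩⟩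
      · have := (I_insert hdm hp hW hn1 hnd hI).1 hI' x0 hx0
        omega
      · have : j2 ∈ insert n p := (hL'.1 j2 hj').2 (pat_j _ _)
        rcases this with h | h
        · omega
        · have := hlow j2 h h1'
          omega
    · by_cases hjn : j1 = n
      · subst hjn
        have hnp : j1 ∈ p := (hL.1 j1 (by omega)).2 (pat_j _ _)
        obtain ⟨hI, hWn⟩ := (I_remove hdm hp h1 h2 hW hnp).2 hL
        exact ⟨⟨hW, Or.inl hI⟩, fun h => absurd hnp h, fun _ h => hWn h.1⟩
      · have hL' := L_mono (Nat.le_succ n) hL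
        exact ⟨⟨hW, Or.inr ⟨j1, h1, h2, by omega, hL'⟩⟩,
          (C_step_L hm hp h1 h2 (by omega) hnt hW hL').2 hL⟩
  · rintro ⟨⟨hW, hI | ⟨j1, h1, h2, hj, hL⟩⟩, hrest⟩
    · have hnd : n ≤ d := by
        by_contra hc
        exact I_late hp (by omega) hI
      refine ⟨hW, ?_⟩
      by_cases hnp : n ∈ p
      · right
        refine ⟨n, hn1, hnd, by omega, (I_remove hdm hp hn1 hnd hW hnp).1 ⟨hI, fun hWn => ?_⟩⟩
        refine hrest.2 hnp ⟨hWn, Or.inl ?_⟩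
        obtain ⟨h0, hlow, ⟨x0, hx0, hx0'⟩, hW0⟩ := hI
        refine ⟨⟨h0, by simp; omega⟩, fun x hx => hlow x hx.1, ?_, ?_⟩
        · obtain ⟨x, ⟨hx, hxn⟩, hxm, hxw⟩ := hWn (m - d) (by omega)
          by_cases hxx : x0 = n
          · -- then `m = d + 1`
            have hmd : m = d + 1 := by omega
            obtain ⟨x, ⟨hx, hxn⟩, hxm, hxw⟩ := hWn 1 (by omega)
            simp only [Set.mem_singleton_iff] at hxn
            have := hlow x hx (by omega)
            exact ⟨x, ⟨hx, by simpa using hxn⟩, by omega⟩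
          · exact ⟨x0, ⟨hx0, by simpa using hxx⟩, hx0'⟩
        · intro hc
          exact hW0 (W_mono hc (by intro x hx; exact ⟨hx.1.1, hx.2⟩))
      · left
        have hni : ¬ I m d n (insert n p) := fun h =>
          hrest.1 hnp ⟨W_mono hW (Set.subset_insert _ _), Or.inl h⟩
        rw [I_insert hdm hp hW hn1 hnd hI] at hni
        push Not at hni
        obtain ⟨x, hx, hx'⟩ := hni
        obtain ⟨h0, hlow, -, hW0⟩ := hI
        refine ⟨h0, fun y hy h1 => ?_, ⟨x, hx, by omega⟩, hW0⟩
        have := hlow y hy h1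
        have : y ≠ n := by rintro rfl; exact hnp hy
        omega
    · exact ⟨hW, Or.inr ⟨j1, h1, h2, by omega, (C_step_L hm hp h1 h2 hj hnt hW hL).1 hrest⟩⟩

theorem C_one {m d : ℕ} {p : Set ℕ} (hd : 1 ≤ d) (hdm : d + 1 ≤ m) (hp : ∀ x ∈ p, x < m) :
    C m d 1 p ↔ W m d p ∧ (0 ∉ p → ¬ W m d (insert 0 p)) ∧ (0 ∈ p → ¬ W m d (p \ {0})) := by
  constructor
  · rintro ⟨hW, hI | ⟨j1, h1, h2, hj, hL⟩⟩
    · exact ⟨hW, fun h => absurd hI.1 h, fun _ => hI.2.2.2⟩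
    · omega
  · rintro ⟨hW, ha, hb⟩
    by_cases h0 : 0 ∈ p
    · refine ⟨hW, Or.inl ⟨h0, fun x _ h => h, ?_, hb h0⟩⟩
      obtain ⟨x, hx, hxm, hxw⟩ := hW (m - d) (by omega)
      exact ⟨x, hx, by omega⟩
    · exact absurd (W_mono hW (Set.subset_insert _ _)) (ha h0)

end Aux

namespace Aux

theorem mem_stepSurv {α : Type*} [DecidableEq α] (x : α) (T : Set (Finset α)) (σ : Finset α) :
    σ ∈ stepSurv x T ↔ σ ∈ T ∧ (x ∉ σ → insert x σ ∉ T) ∧ (x ∈ σ → σ.erase x ∉ T) := by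
  unfold stepSurv stepS
  constructor
  · rintro ⟨hT, h⟩
    refine ⟨hT, fun hx hi => h (Or.inl ⟨hT, hx, hi⟩), fun hx he => h (Or.inr ?_)⟩
    refine ⟨σ.erase x, ⟨he, by simp, ?_⟩, Finset.insert_erase hx⟩
    rw [Finset.insert_erase hx]; exact hT
  · rintro ⟨hT, ha, hb⟩
    refine ⟨hT, ?_⟩
    rintro (⟨-, hx, hi⟩ | ⟨τ, ⟨hτ, hx, hi⟩, rfl⟩)
    · exact ha hx hi
    · apply hb (Finset.mem_insert_self _ _)
      rw [Finset.erase_insert hx]; exact hτ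

theorem phase_take_succ {α : Type*} [DecidableEq α] (T : Set (Finset α)) (l : List α) (n : ℕ)
    (h : n < l.length) : phase T (l.take (n + 1)) = stepSurv l[n] (phase T (l.take n)) := by
  unfold phase
  rw [List.take_add_one, List.foldl_append]
  simp [List.getElem?_eq_getElem h]

theorem phaseA_succ {m : ℕ} (T : Set (Finset (Fin m ⊕ Fin m))) (n : ℕ) (h : n < m) :
    phase T ((listA m).take (n + 1)) = stepSurv (Sum.inl ⟨n, h⟩) (phase T ((listA m).take n)) := by
  rw [phase_take_succ T (listA m) n (by simp [listA, h])]
  simp [listA]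

theorem phaseB_succ {m : ℕ} (T : Set (Finset (Fin m ⊕ Fin m))) (n : ℕ) (h : n < m) :
    phase T ((listB m).take (n + 1)) = stepSurv (Sum.inr ⟨n, h⟩) (phase T ((listB m).take n)) := by
  rw [phase_take_succ T (listB m) n (by simp [listB, h])]
  simp [listB]

/-- `a_i` is dominated by `σ`. -/
def Dom (m d : ℕ) (σ : Finset (Fin m ⊕ Fin m)) (i : Fin m) : Prop :=
  ∃ j : Fin m, Sum.inr j ∈ σ ∧ (j.val + m - i.val) % m < d

theorem ind_iff (m d : ℕ) (σ : Finset (Fin m ⊕ Fin m)) :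
    IsInd m d σ ↔ ∀ i, Sum.inl i ∈ σ → ¬ Dom m d σ i := by
  unfold IsInd Gmd Dom
  constructor
  · rintro h i hi ⟨j, hj, hij⟩
    apply h _ hi _ hj
    rw [SimpleGraph.fromRel_adj]
    exact ⟨by simp, Or.inl ⟨i, j, rfl, rfl, hij⟩⟩
  · intro h u hu v hv hadj
    rw [SimpleGraph.fromRel_adj] at hadj
    rcases hadj with ⟨-, ⟨i, j, rfl, rfl, hij⟩ | ⟨i, j, rfl, rfl, hij⟩⟩
    · exact h i hu ⟨j, hv, hij⟩
    · exact h i hv ⟨j, hu, hij⟩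

theorem phaseA_char (m d : ℕ) (n : ℕ) (hn : n ≤ m) (σ : Finset (Fin m ⊕ Fin m)) :
    σ ∈ phase (faceP m d) ((listA m).take n) ↔
      IsInd m d σ ∧ ∀ i : Fin m, i.val < n → Dom m d σ i := by
  induction n generalizing σ with
  | zero => simp [phase, faceP]
  | succ n ih =>
    rw [phaseA_succ _ n (by omega), mem_stepSurv, ih (by omega), ih (by omega), ih (by omega)]
    have domI : ∀ i i' : Fin m, Dom m d (insert (Sum.inl i') σ) i ↔ Dom m d σ i := by
      intro i i'; simp [Dom]
    have domE : ∀ i i' : Fin m, Dom m d (σ.erase (Sum.inl i')) i ↔ Dom m d σ i := by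
      intro i i'; simp [Dom]
    simp only [ind_iff, domI, domE]
    set a : Fin m := ⟨n, by omega⟩ with ha
    constructor
    · rintro ⟨⟨h1, h2⟩, h3, h4⟩
      refine ⟨h1, fun i hi => ?_⟩
      by_cases hin : i.val < n
      · exact h2 i hin
      have hia : i = a := by apply Fin.ext; simp [ha]; omega
      rw [hia]
      by_contra hnd
      by_cases hmem : Sum.inl a ∈ σ
      · exact h4 hmem ⟨fun k hk => h1 k (Finset.mem_of_mem_erase hk), h2⟩
      · refine h3 hmem ⟨fun k hk => ?_, h2⟩
        rcases Finset.mem_insert.1 hk with h | h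
        · have : k = a := by simpa using h
          rw [this]; exact hnd
        · exact h1 k h
    · rintro ⟨h1, h2⟩
      have hda : Dom m d σ a := h2 a (by simp [ha])
      refine ⟨⟨h1, fun i hi => h2 i (by omega)⟩, ?_, ?_⟩
      · rintro - ⟨h, -⟩
        exact h a (Finset.mem_insert_self _ _) hda
      · intro h _
        exact h1 a h hda

theorem mod_iff {m d x s : ℕ} (hdm : d ≤ m) (hx : x < m) (hs : s < m) :
    (x + m - s) % m < d ↔ ((s ≤ x ∧ x < s + d) ∨ x + m < s + d) := by
  by_cases h : s ≤ x
  · have : x + m - s = (x - s) + m := by omega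
    rw [this, Nat.add_mod_right, Nat.mod_eq_of_lt (by omega)]
    omega
  · rw [Nat.mod_eq_of_lt (by omega)]
    omega

/-- the set of subscripts -/
def bs {m : ℕ} (σ : Finset (Fin m ⊕ Fin m)) : Set ℕ := {n | hasB m σ n}

theorem bs_lt {m : ℕ} (σ : Finset (Fin m ⊕ Fin m)) : ∀ x ∈ bs σ, x < m := by
  rintro x ⟨j, rfl, -⟩
  exact j.2

theorem mem_bs {m : ℕ} (σ : Finset (Fin m ⊕ Fin m)) (j : Fin m) :
    j.val ∈ bs σ ↔ Sum.inr j ∈ σ := by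
  constructor
  · rintro ⟨k, hk, h⟩
    have : k = j := Fin.ext hk
    subst this; exact h
  · intro h; exact ⟨j, rfl, h⟩

theorem bs_insert {m : ℕ} (σ : Finset (Fin m ⊕ Fin m)) (j : Fin m) :
    bs (insert (Sum.inr j) σ) = insert j.val (bs σ) := by
  ext x
  by_cases hx : x < m
  · obtain ⟨k, rfl⟩ : ∃ k : Fin m, k.val = x := ⟨⟨x, hx⟩, rfl⟩
    rw [mem_bs, Set.mem_insert_iff, mem_bs, Finset.mem_insert]
    simp [Fin.ext_iff]
  · constructor
    · intro h; exact absurd (bs_lt _ _ h) hx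
    · rintro (h | h)
      · omega
      · exact absurd (bs_lt _ _ h) hx

theorem bs_erase {m : ℕ} (σ : Finset (Fin m ⊕ Fin m)) (j : Fin m) :
    bs (σ.erase (Sum.inr j)) = bs σ \ {j.val} := by
  ext x
  by_cases hx : x < m
  · obtain ⟨k, rfl⟩ : ∃ k : Fin m, k.val = x := ⟨⟨x, hx⟩, rfl⟩
    rw [mem_bs, Set.mem_sdiff, mem_bs, Finset.mem_erase]
    simp [Fin.ext_iff, and_comm]
  · constructor
    · intro h; exact absurd (bs_lt _ _ h) hx
    · rintro ⟨h, -⟩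
      exact absurd (bs_lt _ _ h) hx

theorem onlyB_insert {m : ℕ} (σ : Finset (Fin m ⊕ Fin m)) (j : Fin m) :
    onlyB m (insert (Sum.inr j) σ) ↔ onlyB m σ := by
  unfold onlyB
  constructor
  · intro h v hv; exact h v (Finset.mem_insert_of_mem hv)
  · intro h v hv
    rcases Finset.mem_insert.1 hv with rfl | hv
    · exact ⟨j, rfl⟩
    · exact h v hv

theorem onlyB_erase {m : ℕ} (σ : Finset (Fin m ⊕ Fin m)) (j : Fin m) (h : onlyB m σ) :
    onlyB m (σ.erase (Sum.inr j)) :=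
  fun v hv => h v (Finset.mem_of_mem_erase hv)

theorem setM_char {m d : ℕ} (hdm : d ≤ m) (σ : Finset (Fin m ⊕ Fin m)) :
    σ ∈ setM m d ↔ onlyB m σ ∧ W m d (bs σ) := by
  have e : setM m d = phase (faceP m d) ((listA m).take m) := by
    unfold setM
    rw [List.take_of_length_le (by simp [listA])]
  rw [e, phaseA_char m d m le_rfl, ind_iff]
  constructor
  · rintro ⟨h1, h2⟩
    refine ⟨?_, ?_⟩
    · rintro (i | j) hv
      · exact absurd (h2 i i.2) (h1 i hv)
      · exact ⟨j, rfl⟩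
    · intro s hs
      obtain ⟨j, hj, hjs⟩ := h2 ⟨s, hs⟩ hs
      exact ⟨j, (mem_bs σ j).2 hj, j.2, (mod_iff hdm j.2 hs).1 hjs⟩
  · rintro ⟨h1, h2⟩
    refine ⟨?_, ?_⟩
    · intro i hi
      obtain ⟨j, hj⟩ := h1 _ hi
      simp at hj
    · intro i _
      obtain ⟨x, hx, hxm, hxw⟩ := h2 i i.2
      exact ⟨⟨x, hxm⟩, (mem_bs σ ⟨x, hxm⟩).1 hx, (mod_iff hdm hxm i.2).2 hxw⟩

theorem phaseB_char {m d t : ℕ} (hd : 1 ≤ d) (hm : t * (d + 1) ≤ m) (hdm : d + 1 ≤ m)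
    (n : ℕ) (hn1 : 1 ≤ n) (hn : n ≤ t * (d + 1)) (σ : Finset (Fin m ⊕ Fin m)) :
    σ ∈ phase (setM m d) ((listB m).take n) ↔ onlyB m σ ∧ C m d n (bs σ) := by
  induction n, hn1 using Nat.le_induction generalizing σ with
  | base =>
    rw [phaseB_succ _ 0 (by omega), mem_stepSurv]
    simp only [List.take_zero, phase, List.foldl_nil]
    rw [setM_char (by omega), setM_char (by omega), setM_char (by omega), C_one hd hdm (bs_lt σ),
      bs_insert, bs_erase, onlyB_insert, ← mem_bs]
    constructor
    · rintro ⟨⟨h1, h2⟩, h3, h4⟩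
      exact ⟨h1, h2, fun h h' => h3 h ⟨h1, h'⟩, fun h h' => h4 h ⟨onlyB_erase _ _ h1, h'⟩⟩
    · rintro ⟨h1, h2, h3, h4⟩
      exact ⟨⟨h1, h2⟩, fun h h' => h3 h h'.2, fun h h' => h4 h h'.2⟩
  | succ n hn1 ih =>
    rw [phaseB_succ _ n (by omega), mem_stepSurv, ih (by omega), ih (by omega), ih (by omega),
      C_step hm hdm (bs_lt σ) hn1 (by omega), bs_insert, bs_erase, onlyB_insert, ← mem_bs]
    constructor
    · rintro ⟨⟨h1, h2⟩, h3, h4⟩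
      exact ⟨h1, h2, fun h h' => h3 h ⟨h1, h'⟩, fun h h' => h4 h ⟨onlyB_erase _ _ h1, h'⟩⟩
    · rintro ⟨h1, h2, h3, h4⟩
      exact ⟨⟨h1, h2⟩, fun h h' => h3 h h'.2, fun h h' => h4 h h'.2⟩

theorem surv_iff {m d : ℕ} (N : ℕ) (hN : N ≤ m) (σ : Finset (Fin m ⊕ Fin m))
    (hM : σ ∈ setM m d) :
    (∀ i : Fin m, i.val < N → σ ∉ scriptSb m d i) ↔
      σ ∈ phase (setM m d) ((listB m).take N) := by
  induction N with
  | zero => simp [phase, hM]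
  | succ n ih =>
    rw [phaseB_succ _ n (by omega)]
    have ih' := ih (by omega)
    constructor
    · intro h
      exact ⟨ih'.1 (fun i hi => h i (by omega)), h ⟨n, by omega⟩ (by simp)⟩
    · rintro ⟨h1, h2⟩ i hi
      by_cases hin : i.val < n
      · exact ih'.2 h1 i hin
      · have hie : i = ⟨n, by omega⟩ := by apply Fin.ext; simp; omega
        rw [hie]
        exact h2

end Aux

/-- 0-based indices: write `m = t(d+1) + a` with `t ≥ 1`, `0 ≤ a ≤ d`.  Let
`σ = {b_0, b_{j_2}, …, b_k} ⊆ B` be a simplex in `M` and let `l ∈ {1, …, t}`.  Then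
`σ ∉ 𝒮_{b_i}` for all `i < l(d+1)` (the first `l(d+1)` vertices of `B`) iff `σ` satisfies
property `P_l` for some `j1`. -/
theorem stmt12 (m d t a l : ℕ) (hd : 1 ≤ d) (hdm : d ≤ m)
    (ht : 1 ≤ t) (ha : a ≤ d) (hm : m = t * (d + 1) + a)
    (hl : 1 ≤ l) (hlt : l ≤ t)
    (σ : Finset (Fin m ⊕ Fin m)) (hB : onlyB m σ) (hM : σ ∈ setM m d)
    (h0 : hasB m σ 0) (hcard : 2 ≤ σ.card) :
    (∀ i : Fin m, i.val < l * (d + 1) → σ ∉ scriptSb m d i) ↔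
      ∃ j1, propP m d l j1 σ := by
  have htd : 1 * (d + 1) ≤ t * (d + 1) := Nat.mul_le_mul_right _ ht
  have hld : 1 * (d + 1) ≤ l * (d + 1) := Nat.mul_le_mul_right _ hl
  have hltd : l * (d + 1) ≤ t * (d + 1) := Nat.mul_le_mul_right _ hlt
  have hm' : t * (d + 1) ≤ m := by omega
  have hdm' : d + 1 ≤ m := by omega
  have hlast : l * (d + 1) = (l - 1) * (d + 1) + (d + 1) := by
    obtain ⟨k, rfl⟩ : ∃ k, l = k + 1 := ⟨l - 1, by omega⟩
    simp; ring
  have hW : Aux.W m d (Aux.bs σ) := ((Aux.setM_char hdm σ).1 hM).2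
  rw [Aux.surv_iff _ (by omega) σ hM, Aux.phaseB_char hd hm' hdm' _ (by omega) hltd]
  have hpatlt : ∀ r j1, 1 ≤ r → r ≤ l → j1 ≤ d → j1 + (r - 1) * (d + 1) < l * (d + 1) := by
    intro r j1 h1 h2 h3
    have := Nat.mul_le_mul_right (d + 1) (show r - 1 ≤ l - 1 by omega)
    omega
  constructor
  · rintro ⟨-, -, hI | ⟨j1, h1, h2, hj, hL⟩⟩
    · exact absurd hI (Aux.I_late (Aux.bs_lt σ) (by omega))
    refine ⟨j1, hM, hB, h1, h2, ?_, ?_, hL.2.2.1, ?_, ?_⟩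
    · intro r hr1 hr2
      have := hpatlt r j1 hr1 hr2 h2
      exact ⟨(hL.1 _ (by omega)).2 ⟨r - 1, Or.inl rfl⟩,
        (hL.1 _ this).2 ⟨r - 1, Or.inr (by omega)⟩⟩
    · intro j hjσ hjle
      have hpat := (hL.1 j.val (by omega)).1 ((Aux.mem_bs σ j).2 hjσ)
      obtain ⟨r, hr⟩ := hpat
      have hrl : r < l := by
        by_contra hc
        have := Nat.mul_le_mul_right (d + 1) (not_lt.mp hc)
        omega
      exact ⟨r + 1, by omega, by omega, by simp; omega⟩
    · intro j hjσ
      exact hL.2.2.2 _ ((Aux.mem_bs σ j).2 hjσ)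
    · intro r hr1 hr2 j hjr
      have hlt' := hpatlt r j1 hr1 hr2 h2
      have hpat : Aux.Pat d j1 j.val := ⟨r - 1, by omega⟩
      have hjl : j.val < l * (d + 1) := by omega
      have hjσ : j.val ∈ Aux.bs σ := (hL.1 _ hjl).2 hpat
      rw [Aux.setM_char hdm, Aux.bs_erase]
      rintro ⟨-, hWj⟩
      by_cases hj0 : j.val = 0
      · rw [hj0] at hWj
        have hj1 : j1 ∈ Aux.bs σ := (hL.1 j1 (by omega)).2 (Aux.pat_j _ _)
        exact ((Aux.I_remove hdm' (Aux.bs_lt σ) h1 h2 hW hj1).2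
          (Aux.L_mono (by omega) hL)).1.2.2.2 hWj
      · exact (Aux.L_step hm' h1 h2 (by omega) (by omega) hW (Aux.L_mono (by omega) hL)
          hpat hjσ).2 (Aux.L_mono (by omega) hL) hWj
  · rintro ⟨j1, -, -, h1, h2, hhas, hlow, hk, hmax, hess⟩
    refine ⟨hB, hW, Or.inr ⟨j1, h1, h2, by omega, ?_⟩⟩
    have hjl := hpatlt l j1 hl le_rfl h2
    have hpatl : Aux.Pat d j1 (j1 + (l - 1) * (d + 1)) := ⟨l - 1, Or.inr (by omega)⟩
    have hmem : j1 + (l - 1) * (d + 1) ∈ Aux.bs σ := (hhas l hl le_rfl).2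
    have hmax' : ∀ x ∈ Aux.bs σ, x ≤ m + j1 - (d + 1) := by
      rintro x ⟨j, rfl, hj⟩
      exact hmax j hj
    have hL : Aux.L m d (j1 + (l - 1) * (d + 1)) j1 (Aux.bs σ) := by
      refine ⟨?_, ?_, hk, hmax'⟩
      · intro x hx
        constructor
        · rintro ⟨j, rfl, hj⟩
          obtain ⟨r, -, -, hr⟩ := hlow j hj (by omega)
          exact ⟨r - 1, by omega⟩
        · rintro ⟨r, hr⟩
          have hrl : r < l := by
            by_contra hc
            have := Nat.mul_le_mul_right (d + 1) (not_lt.mp hc)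
            omega
          have := hhas (r + 1) (by omega) (by omega)
          simp only [Nat.add_sub_cancel] at this
          rcases hr with rfl | rfl
          · exact this.1
          · rw [add_comm]; exact this.2
      · intro x hx hle
        exact ⟨_, le_rfl, hle, hpatl⟩
    have hnW : ¬ Aux.W m d (Aux.bs σ \ {j1 + (l - 1) * (d + 1)}) := by
      intro hc
      have := hess l hl le_rfl ⟨j1 + (l - 1) * (d + 1), by omega⟩ (Or.inr rfl)
      rw [Aux.setM_char hdm, Aux.bs_erase] at this
      exact this ⟨Aux.onlyB_erase _ _ hB, hc⟩
    have hL' := (Aux.L_step hm' h1 h2 (by omega) (by omega) hW hL hpatl hmem).1 hnW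
    have hnone : ∀ y, Aux.Pat d j1 y → j1 + (l - 1) * (d + 1) < y → l * (d + 1) ≤ y := by
      intro y hy hlt'
      by_contra hc
      have := Aux.pat_between (r := l - 1) h1 h2 hy (by omega) (by omega)
      omega
    refine ⟨?_, ?_, hk, hmax'⟩
    · intro x hx
      by_cases hc : x < j1 + (l - 1) * (d + 1) + 1
      · exact hL'.1 x hc
      · constructor
        · intro hxσ
          obtain ⟨y, hy1, hy2, hy3⟩ := hL'.2.1 x hxσ (by omega)
          have := hnone y hy3 (by omega)
          omega
        · intro hpx
          have := hnone x hpx (by omega)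
          omega
    · intro x hx hle
      exact ⟨_, le_rfl, hle, ⟨l, Or.inl rfl⟩⟩
end
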